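/- arXiv:2010.11292 — 5 statements merged into one kernel-verified Lean document; each statement's English description precedes it below -/
import Mathlib

section
/- Let d, K be positive integers, X ⊆ ℝ^d a closed convex set with 0 ∈ X, and ψ : ℝ^d → ℝ a function that is 1-strongly convex on X with respect to the Euclidean norm, with ψ(x) ≥ 0 for all x ∈ X and ψ(0) = 0. Let g(1), …, g(K) ∈ ℝ^d be arbitrary vectors and let η(0) ≥ η(1) ≥ … ≥ η(K) > 0 be a nonincreasing positive sequence. Define x(1) = 0 and, for each k ∈ {1,…,K}, let x(k+1) ∈ X be a minimizer over X of x ↦ ⟨Σ_{s=1}^k g(s), x⟩ + ψ(x)/η(k). Then for every x* ∈ X: Σ_{k=1}^K ⟨g(k), x(k) - x*⟩ ≤ (1/2) Σ_{k=1}^K η(k-1) ‖g(k)‖₂² + ψ(x*)/η(K). -/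
open scoped RealInnerProductSpace
open Finset

/-! The objective minimized at step `k` is `m / η k`-strongly convex, so adding the next linear loss
`g (k + 1)` to it lowers its minimum, relative to the loss at the old minimizer, by at most
`η k * ‖g (k + 1)‖ ^ 2 / (2 * m)`. Once the minimum of `ψ` is subtracted from `ψ`, decreasing the
learning rate only increases the objective. Hence these one-step comparisons telescope, and
comparing the last minimum with the value at `x*` gives the regret bound. -/

section StrongConvexity

variable {E : Type*} [NormedAddCommGroup E] [NormedSpace ℝ E] {s : Set E} {f : E → ℝ} {u w : E}

lemma add_modulus_le_of_uniformConvexOn_of_isMinOn {φ : ℝ → ℝ} (hf : UniformConvexOn s φ f)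
    (hu : u ∈ s) (hmin : IsMinOn f s u) (hw : w ∈ s) : f u + φ ‖w - u‖ ≤ f w := by
  have scaled_gap : ∀ t ∈ Set.Ioo (0 : ℝ) 1, f u + (1 - t) * φ ‖w - u‖ ≤ f w := by
    rintro t ⟨ht₀, ht₁⟩
    have ht₁' : 0 ≤ 1 - t := sub_nonneg.2 ht₁.le
    have hsum : t + (1 - t) = 1 := add_sub_cancel t 1
    have hsegment := (hmin (hf.1 hw hu ht₀.le ht₁' hsum)).trans (hf.2 hw hu ht₀.le ht₁' hsum)
    simp only [smul_eq_mul] at hsegment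
    refine le_of_mul_le_mul_left ?_ ht₀
    linarith
  have hlim : Filter.Tendsto (fun t : ℝ ↦ f u + (1 - t) * φ ‖w - u‖) (nhdsWithin 0 (Set.Ioi 0))
      (nhds (f u + φ ‖w - u‖)) := by
    have hcont : Continuous fun t : ℝ ↦ f u + (1 - t) * φ ‖w - u‖ := by fun_prop
    simpa using (hcont.tendsto 0).mono_left nhdsWithin_le_nhds
  exact le_of_tendsto hlim (Filter.mem_of_superset (Ioo_mem_nhdsGT one_pos) scaled_gap)

lemma strongDual_apply_le_sq_add_sq {m : ℝ} (hm : 0 < m) (g : StrongDual ℝ E) (v : E) :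
    g v ≤ ‖g‖ ^ 2 / (2 * m) + m / 2 * ‖v‖ ^ 2 := by
  have hyoung : 2 * ‖v‖ * ‖g‖ ≤ m * ‖v‖ ^ 2 + m⁻¹ * ‖g‖ ^ 2 := two_mul_le_add_mul_sq hm
  calc
    g v ≤ ‖g‖ * ‖v‖ := (le_abs_self _).trans (g.le_opNorm v)
    _ ≤ (m * ‖v‖ ^ 2 + m⁻¹ * ‖g‖ ^ 2) / 2 := by linarith
    _ = ‖g‖ ^ 2 / (2 * m) + m / 2 * ‖v‖ ^ 2 := by field_simp; ring

lemma add_strongDual_le_of_strongConvexOn_of_isMinOn {m : ℝ} (hm : 0 < m)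
    (hf : StrongConvexOn s m f) (hu : u ∈ s) (hmin : IsMinOn f s u) (g : StrongDual ℝ E)
    (hw : w ∈ s) : f u + g u ≤ f w + g w + ‖g‖ ^ 2 / (2 * m) := by
  have hgrowth : f u + m / 2 * ‖w - u‖ ^ 2 ≤ f w :=
    add_modulus_le_of_uniformConvexOn_of_isMinOn hf hu hmin hw
  have hyoung := strongDual_apply_le_sq_add_sq hm g (u - w)
  rw [map_sub, norm_sub_rev] at hyoung
  linarith

lemma strongConvexOn_strongDual_add_div {m c : ℝ} (hf : StrongConvexOn s m f) (hc : 0 ≤ c)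
    (g : StrongDual ℝ E) : StrongConvexOn s (m / c) fun w ↦ g w + f w / c := by
  refine ⟨hf.1, fun v hv w hw a b ha hb hab ↦ ?_⟩
  have hdiv := div_le_div_of_nonneg_right (hf.2 hv hw ha hb hab) hc
  simp only [map_add, map_smul, smul_eq_mul] at hdiv ⊢
  calc
    a * g v + b * g w + f (a • v + b • w) / c
        ≤ a * g v + b * g w + (a * f v + b * f w - a * b * (m / 2 * ‖v - w‖ ^ 2)) / c := by gcongr
    _ = a * (g v + f v / c) + b * (g w + f w / c) - a * b * (m / c / 2 * ‖v - w‖ ^ 2) := by ring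

end StrongConvexity

section DualAveraging

variable {E : Type*} [NormedAddCommGroup E] [NormedSpace ℝ E] {X : Set E} {ψ : E → ℝ}
  {g : ℕ → StrongDual ℝ E} {η : ℕ → ℝ} {x : ℕ → E} {m : ℝ}

/-- The function minimized by the dual averaging (lazy mirror descent) iterate `x (k + 1)`: the
accumulated linear losses `g 1, …, g k` plus the regularizer `ψ` scaled by the inverse learning
rate. The losses are functionals, so that their size is measured in the dual norm. -/
noncomputable def dualAveragingObjective (ψ : E → ℝ) (g : ℕ → StrongDual ℝ E) (η : ℕ → ℝ) (k : ℕ)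
    (w : E) : ℝ :=
  (∑ s ∈ Icc 1 k, g s) w + ψ w / η k

lemma dualAveragingObjective_zero : dualAveragingObjective ψ g η 0 = fun w ↦ ψ w / η 0 := by
  ext w
  simp [dualAveragingObjective]

lemma dualAveragingObjective_add_apply_le_succ {k : ℕ} {w : E} {c : ℝ} (hηpos : 0 < η (k + 1))
    (hηle : η (k + 1) ≤ η k) (hc : c ≤ ψ w) :
    dualAveragingObjective ψ g η k w - c / η k + g (k + 1) w
      ≤ dualAveragingObjective ψ g η (k + 1) w - c / η (k + 1) := by
  have hregularizer : (ψ w - c) / η k ≤ (ψ w - c) / η (k + 1) :=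
    div_le_div_of_nonneg_left (sub_nonneg.2 hc) hηpos hηle
  simp only [dualAveragingObjective, sum_Icc_succ_top (Nat.le_add_left 1 k), add_apply]
  linarith [sub_div (ψ w) c (η k), sub_div (ψ w) c (η (k + 1))]

lemma apply_le_dualAveragingObjective_sub {k : ℕ} {u v : E} {c : ℝ} (hm : 0 < m)
    (hψ : StrongConvexOn X m ψ) (hηpos : 0 < η (k + 1)) (hηle : η (k + 1) ≤ η k) (hu : u ∈ X)
    (hmin : IsMinOn (dualAveragingObjective ψ g η k) X u) (hv : v ∈ X) (hc : c ≤ ψ v) :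
    g (k + 1) u ≤ 1 / (2 * m) * (η k * ‖g (k + 1)‖ ^ 2)
      + (dualAveragingObjective ψ g η (k + 1) v - c / η (k + 1))
      - (dualAveragingObjective ψ g η k u - c / η k) := by
  have hηk : 0 < η k := hηpos.trans_le hηle
  have hstable := add_strongDual_le_of_strongConvexOn_of_isMinOn (div_pos hm hηk)
    (strongConvexOn_strongDual_add_div hψ hηk.le _) hu hmin (g (k + 1)) hv
  have hscale : ‖g (k + 1)‖ ^ 2 / (2 * (m / η k)) = 1 / (2 * m) * (η k * ‖g (k + 1)‖ ^ 2) := by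
    field_simp
  have hnext := dualAveragingObjective_add_apply_le_succ (g := g) hηpos hηle hc
  simp only [dualAveragingObjective] at hnext ⊢
  linarith

lemma sum_apply_le_dualAveragingObjective {n : ℕ} (hm : 0 < m) (hψ : StrongConvexOn X m ψ)
    (hηpos : ∀ k ≤ n, 0 < η k) (hηmono : ∀ k < n, η (k + 1) ≤ η k)
    (hx1 : IsMinOn ψ X (x 1)) (hxmem : ∀ k ≤ n, x (k + 1) ∈ X)
    (hxmin : ∀ k < n, IsMinOn (dualAveragingObjective ψ g η k) X (x (k + 1))) :
    ∑ k ∈ Icc 1 n, g k (x k)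
      ≤ 1 / (2 * m) * ∑ k ∈ Icc 1 n, η (k - 1) * ‖g k‖ ^ 2
        + (dualAveragingObjective ψ g η n (x (n + 1)) - ψ (x 1) / η n) := by
  induction n with
  | zero => simp [dualAveragingObjective_zero]
  | succ n ih =>
    have hprev := ih (fun k hk ↦ hηpos k (by lia)) (fun k hk ↦ hηmono k (by lia))
      (fun k hk ↦ hxmem k (by lia)) (fun k hk ↦ hxmin k (by lia))
    have hround := apply_le_dualAveragingObjective_sub hm hψ (hηpos (n + 1) le_rfl)
      (hηmono n n.lt_succ_self) (hxmem n n.le_succ) (hxmin n n.lt_succ_self)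
      (hxmem (n + 1) le_rfl) (hx1 (hxmem (n + 1) le_rfl))
    rw [sum_Icc_succ_top (by lia), sum_Icc_succ_top (by lia), mul_add, Nat.add_sub_cancel]
    linarith

theorem stmt_3_general {K : ℕ} (hm : 0 < m) (hψ : StrongConvexOn X m ψ)
    (hηpos : ∀ k ≤ K, 0 < η k) (hηmono : ∀ k < K, η (k + 1) ≤ η k)
    (hx1mem : x 1 ∈ X) (hx1min : IsMinOn ψ X (x 1))
    (hxmem : ∀ k ∈ Icc 1 K, x (k + 1) ∈ X)
    (hxmin : ∀ k ∈ Icc 1 K, IsMinOn (dualAveragingObjective ψ g η k) X (x (k + 1))) :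
    ∀ xstar ∈ X,
      ∑ k ∈ Icc 1 K, g k (x k - xstar)
        ≤ 1 / (2 * m) * ∑ k ∈ Icc 1 K, η (k - 1) * ‖g k‖ ^ 2 + (ψ xstar - ψ (x 1)) / η K := by
  intro xstar hxstar
  have hmem : ∀ k ≤ K, x (k + 1) ∈ X
    | 0, _ => hx1mem
    | k + 1, hk => hxmem (k + 1) (mem_Icc.2 ⟨k.succ_pos, hk⟩)
  have hmin : ∀ k ≤ K, IsMinOn (dualAveragingObjective ψ g η k) X (x (k + 1))
    | 0, hk => by
      rw [dualAveragingObjective_zero]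
      exact fun w hw ↦ div_le_div_of_nonneg_right (hx1min hw) (hηpos 0 hk).le
    | k + 1, hk => hxmin (k + 1) (mem_Icc.2 ⟨k.succ_pos, hk⟩)
  have hiterates := sum_apply_le_dualAveragingObjective hm hψ hηpos hηmono hx1min hmem
    fun k hk ↦ hmin k hk.le
  have hcomparator : dualAveragingObjective ψ g η K (x (K + 1))
      ≤ ∑ k ∈ Icc 1 K, g k xstar + ψ xstar / η K := by
    simpa only [dualAveragingObjective, _root_.sum_apply] using
      isMinOn_iff.1 (hmin K le_rfl) xstar hxstar
  simp only [map_sub, sum_sub_distrib, sub_div]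
  linarith

end DualAveraging

/-- The basic dual-averaging (lazy mirror descent) regret bound:
`Σ_{k=1}^K ⟨g(k), x(k) - x*⟩ ≤ (1/2) Σ_{k=1}^K η(k-1) ‖g(k)‖² + ψ(x*)/η(K)`. -/
theorem stmt_3 (d K : ℕ) (hd : 0 < d) (hK : 0 < K)
    (X : Set (EuclideanSpace ℝ (Fin d))) (hXc : IsClosed X) (hXconv : Convex ℝ X)
    (h0X : (0 : EuclideanSpace ℝ (Fin d)) ∈ X)
    (ψ : EuclideanSpace ℝ (Fin d) → ℝ) (hψ : StrongConvexOn X 1 ψ)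
    (hψnonneg : ∀ x ∈ X, 0 ≤ ψ x) (hψ0 : ψ 0 = 0)
    (g : ℕ → EuclideanSpace ℝ (Fin d))
    (η : ℕ → ℝ) (hηpos : ∀ k ≤ K, 0 < η k) (hηmono : ∀ k < K, η (k + 1) ≤ η k)
    (x : ℕ → EuclideanSpace ℝ (Fin d)) (hx1 : x 1 = 0)
    (hxmem : ∀ k ∈ Icc 1 K, x (k + 1) ∈ X)
    (hxmin : ∀ k ∈ Icc 1 K, ∀ w ∈ X,
      ⟪∑ s ∈ Icc 1 k, g s, x (k + 1)⟫ + ψ (x (k + 1)) / η k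
        ≤ ⟪∑ s ∈ Icc 1 k, g s, w⟫ + ψ w / η k) :
    ∀ xstar ∈ X,
      ∑ k ∈ Icc 1 K, ⟪g k, x k - xstar⟫
        ≤ (1 / 2) * ∑ k ∈ Icc 1 K, η (k - 1) * ‖g k‖ ^ 2 + ψ xstar / η K := by
  simpa [hx1, hψ0] using stmt_3_general (g := fun k ↦ innerSL ℝ (g k)) one_pos hψ hηpos hηmono
    (hx1 ▸ h0X) (fun w hw ↦ by simpa [hx1, hψ0] using hψnonneg w hw) hxmem fun k hk w hw ↦ by
      simpa [dualAveragingObjective, sum_inner] using hxmin k hk w hw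
end

section
/- Let d, n, K be positive integers, X ⊆ ℝ^d a closed convex set, ψ : ℝ^d → ℝ 1-strongly convex on X with respect to the Euclidean norm, and let f : ℝ^d → ℝ be convex and L-Lipschitz on X with respect to the Euclidean norm. Let η(1), …, η(K) > 0, let z_1(k), …, z_n(k) ∈ ℝ^d for k ∈ {1,…,K}, and set z̄(k) = (1/n) Σ_{j=1}^n z_j(k). For each k, let x_i(k) ∈ X be a minimizer over X of x ↦ ⟨z_i(k), x⟩ + ψ(x)/η(k), and let y(k) ∈ X be a minimizer over X of x ↦ ⟨z̄(k), x⟩ + ψ(x)/η(k). Then for every i ∈ {1,…,n} and every x* ∈ X: Σ_{k=1}^K [f(x_i(k)) - f(x*)] ≤ Σ_{k=1}^K [f(y(k)) - f(x*)] + L Σ_{k=1}^K η(k) ‖z̄(k) - z_i(k)‖₂. -/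
open scoped RealInnerProductSpace
open Finset

/-!
Along the segment from a minimizer `x` to `y`, uniform convexity forces growth by the full modulus:
`f y ≥ f x + φ ‖x - y‖`. For dual states `z` and `w`, apply this to `η • z + ψ` at its minimizer `x`
and to `η • w + ψ` at its minimizer `y`, each compared with the other point, and add: the values of
`ψ` cancel. If `ψ` is `m`-strongly convex, this leaves
`m ‖x - y‖² ≤ η (w - z) (x - y) ≤ η ‖w - z‖ ‖x - y‖`, so the projection is `η / m`-Lipschitz in the
dual state, and the Lipschitz bound on `f` turns this into the claim, one iteration at a time.
-/

open scoped NNReal Topology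

section ProxProjection

variable {E : Type*} [NormedAddCommGroup E] [NormedSpace ℝ E]
  {X : Set E} {φ : ℝ → ℝ} {ψ f : E → ℝ} {m η : ℝ} {z w : E →L[ℝ] ℝ} {x y : E}

theorem add_modulus_le_of_isMinOn (hf : UniformConvexOn X φ f) (hmin : IsMinOn f X x)
    (hx : x ∈ X) (hy : y ∈ X) : f x + φ ‖x - y‖ ≤ f y := by
  have segment_bound : ∀ t ∈ Set.Ioo (0 : ℝ) 1, f x + (1 - t) * φ ‖x - y‖ ≤ f y := by
    rintro t ⟨ht0, ht1⟩
    have hmem := hf.1 hx hy (sub_nonneg.2 ht1.le) ht0.le (sub_add_cancel 1 t)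
    have hconv := hf.2 hx hy (sub_nonneg.2 ht1.le) ht0.le (sub_add_cancel 1 t)
    have hle := (isMinOn_iff.1 hmin _ hmem).trans hconv
    simp only [smul_eq_mul] at hle
    refine le_of_mul_le_mul_left ?_ ht0
    linarith
  have hlim : Filter.Tendsto (fun t : ℝ ↦ f x + (1 - t) * φ ‖x - y‖) (𝓝[>] 0)
      (𝓝 (f x + φ ‖x - y‖)) :=
    (Continuous.tendsto' (by fun_prop) 0 _ (by simp)).mono_left nhdsWithin_le_nhds
  exact le_of_tendsto hlim <|
    Filter.eventually_of_mem (Ioo_mem_nhdsGT one_pos) segment_bound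

/-- `IsProxProjection X ψ z η x` says that `x` is a value of the projection `Π_X^ψ(z, η)` of dual
averaging. The dual variable `z` is a continuous linear functional, so that its norm is the dual
norm; being a relation, this presupposes neither existence nor uniqueness of the projection. -/
structure IsProxProjection (X : Set E) (ψ : E → ℝ) (z : E →L[ℝ] ℝ) (η : ℝ) (x : E) : Prop where
  mem : x ∈ X
  isMinOn : IsMinOn (fun v ↦ z v + ψ v / η) X x

namespace IsProxProjection

theorem isMinOn_smul_add (hx : IsProxProjection X ψ z η x) (hη : 0 < η) :
    IsMinOn (⇑(η • z) + ψ) X x := by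
  convert hx.isMinOn.comp_mono (monotone_mul_left_of_nonneg hη.le) using 1
  ext v
  simp [mul_add, mul_div_cancel₀ _ hη.ne']

theorem add_modulus_le (hx : IsProxProjection X ψ z η x) (hψ : UniformConvexOn X φ ψ)
    (hη : 0 < η) (hy : y ∈ X) : η * z x + ψ x + φ ‖x - y‖ ≤ η * z y + ψ y := by
  have hconv : UniformConvexOn X (0 + φ) (⇑(η • z) + ψ) :=
    ((η • z).toLinearMap.convexOn hψ.1).uniformConvexOn_zero.add hψ
  simpa using add_modulus_le_of_isMinOn hconv (hx.isMinOn_smul_add hη) hx.mem hy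

theorem two_mul_modulus_le (hx : IsProxProjection X ψ z η x) (hy : IsProxProjection X ψ w η y)
    (hψ : UniformConvexOn X φ ψ) (hη : 0 < η) :
    2 * φ ‖x - y‖ ≤ η * (w - z) (x - y) := by
  have hxy := hx.add_modulus_le hψ hη hy.mem
  have hyx := hy.add_modulus_le hψ hη hx.mem
  rw [norm_sub_rev] at hyx
  simp only [sub_apply, map_sub]
  linarith

theorem mul_norm_sub_le (hx : IsProxProjection X ψ z η x) (hy : IsProxProjection X ψ w η y)
    (hψ : StrongConvexOn X m ψ) (hη : 0 < η) : m * ‖x - y‖ ≤ η * ‖w - z‖ := by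
  obtain hxy | hxy := (norm_nonneg (x - y)).eq_or_lt
  · rw [← hxy, mul_zero]
    positivity
  refine le_of_mul_le_mul_right ?_ hxy
  calc m * ‖x - y‖ * ‖x - y‖ = 2 * (m / 2 * ‖x - y‖ ^ 2) := by ring
    _ ≤ η * (w - z) (x - y) := hx.two_mul_modulus_le hy hψ hη
    _ ≤ η * (‖w - z‖ * ‖x - y‖) := by
      gcongr
      exact (le_abs_self _).trans ((w - z).le_opNorm _)
    _ = η * ‖w - z‖ * ‖x - y‖ := by ring

theorem sub_le_of_lipschitzOnWith {L : ℝ≥0} (hx : IsProxProjection X ψ z η x)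
    (hy : IsProxProjection X ψ w η y) (hψ : StrongConvexOn X m ψ) (hm : 0 < m) (hη : 0 < η)
    (hf : LipschitzOnWith L f X) : f x - f y ≤ L / m * (η * ‖w - z‖) :=
  calc
    f x - f y ≤ L * ‖x - y‖ := by
      simpa only [dist_eq_norm] using (le_abs_self _).trans (hf.dist_le_mul x hx.mem y hy.mem)
    _ = L / m * (m * ‖x - y‖) := by field_simp
    _ ≤ L / m * (η * ‖w - z‖) :=
      mul_le_mul_of_nonneg_left (hx.mul_norm_sub_le hy hψ hη) (by positivity)

end IsProxProjection

end ProxProjection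

theorem stmt_4_general {E ι : Type*} [NormedAddCommGroup E] [NormedSpace ℝ E] {T : Finset ι}
    {X : Set E} {ψ f : E → ℝ} {m : ℝ} {L : ℝ≥0} {η : ι → ℝ} {z w : ι → E →L[ℝ] ℝ} {x y : ι → E}
    (hψ : StrongConvexOn X m ψ) (hm : 0 < m) (hf : LipschitzOnWith L f X)
    (hη : ∀ k ∈ T, 0 < η k) (hx : ∀ k ∈ T, IsProxProjection X ψ (z k) (η k) (x k))
    (hy : ∀ k ∈ T, IsProxProjection X ψ (w k) (η k) (y k)) (xstar : E) :
    ∑ k ∈ T, (f (x k) - f xstar)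
      ≤ ∑ k ∈ T, (f (y k) - f xstar) + L / m * ∑ k ∈ T, η k * ‖w k - z k‖ := by
  rw [mul_sum, ← sum_add_distrib]
  refine sum_le_sum fun k hk ↦ ?_
  linarith [(hx k hk).sub_le_of_lipschitzOnWith (hy k hk) hψ hm (hη k hk) hf]

/-- Relating the local primal iterates to the centralized ones:
`Σ_k [f(x_i(k)) - f(x*)] ≤ Σ_k [f(y(k)) - f(x*)] + L Σ_k η(k) ‖z̄(k) - z_i(k)‖`. -/
theorem stmt_4 (d n K : ℕ) (hd : 0 < d) (hn : 0 < n) (hK : 0 < K)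
    (X : Set (EuclideanSpace ℝ (Fin d))) (hXc : IsClosed X) (hXconv : Convex ℝ X)
    (ψ : EuclideanSpace ℝ (Fin d) → ℝ) (hψ : StrongConvexOn X 1 ψ)
    (f : EuclideanSpace ℝ (Fin d) → ℝ) (hfconv : ConvexOn ℝ X f)
    (L : ℝ) (hL : 0 < L) (hLip : ∀ x ∈ X, ∀ y ∈ X, |f x - f y| ≤ L * ‖x - y‖)
    (η : ℕ → ℝ) (hη : ∀ k ∈ Icc 1 K, 0 < η k)
    (z : Fin n → ℕ → EuclideanSpace ℝ (Fin d))
    (zbar : ℕ → EuclideanSpace ℝ (Fin d))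
    (hzbar : ∀ k, zbar k = (n : ℝ)⁻¹ • ∑ j : Fin n, z j k)
    (x : Fin n → ℕ → EuclideanSpace ℝ (Fin d))
    (y : ℕ → EuclideanSpace ℝ (Fin d))
    (hxmem : ∀ i, ∀ k ∈ Icc 1 K, x i k ∈ X)
    (hxmin : ∀ i, ∀ k ∈ Icc 1 K, ∀ w ∈ X,
      ⟪z i k, x i k⟫ + ψ (x i k) / η k ≤ ⟪z i k, w⟫ + ψ w / η k)
    (hymem : ∀ k ∈ Icc 1 K, y k ∈ X)
    (hymin : ∀ k ∈ Icc 1 K, ∀ w ∈ X,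
      ⟪zbar k, y k⟫ + ψ (y k) / η k ≤ ⟪zbar k, w⟫ + ψ w / η k) :
    ∀ i : Fin n, ∀ xstar ∈ X,
      ∑ k ∈ Icc 1 K, (f (x i k) - f xstar)
        ≤ ∑ k ∈ Icc 1 K, (f (y k) - f xstar)
          + L * ∑ k ∈ Icc 1 K, η k * ‖zbar k - z i k‖ := by
  intro i xstar _
  lift L to ℝ≥0 using hL.le
  simpa [← map_sub] using stmt_4_general (z := fun k ↦ innerSL ℝ (z i k))
    (w := fun k ↦ innerSL ℝ (zbar k)) hψ one_pos (.of_dist_le_mul hLip) hη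
    (fun k hk ↦ ⟨hxmem i k hk, hxmin i k hk⟩) (fun k hk ↦ ⟨hymem k hk, hymin k hk⟩) xstar
end

section
/- Let d, n, K be positive integers, X ⊆ ℝ^d a closed convex set, ψ : ℝ^d → ℝ 1-strongly convex on X with respect to the Euclidean norm, and let f : ℝ^d → ℝ be convex and L-Lipschitz on X with respect to the Euclidean norm. Let η(1), …, η(K) > 0, let z_1(k), …, z_n(k) ∈ ℝ^d for k ∈ {1,…,K}, and set z̄(k) = (1/n) Σ_{j=1}^n z_j(k). For each k, let x_i(k) ∈ X be a minimizer over X of x ↦ ⟨z_i(k), x⟩ + ψ(x)/η(k), and y(k) ∈ X a minimizer over X of x ↦ ⟨z̄(k), x⟩ + ψ(x)/η(k). Define the running averages x̂_i(K) = (1/K) Σ_{k=1}^K x_i(k) and ŷ(K) = (1/K) Σ_{k=1}^K y(k). Then for every i ∈ {1,…,n} and every x* ∈ X: f(x̂_i(K)) - f(x*) ≤ f(ŷ(K)) - f(x*) + (L/K) Σ_{k=1}^K η(k) ‖z̄(k) - z_i(k)‖₂. -/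
open scoped RealInnerProductSpace
open Finset

/-!
A minimizer `p` of an `m`-strongly convex function on `X` beats every `q ∈ X` by
`m / 2 * ‖p - q‖ ^ 2`. When `ψ` is `m`-strongly convex, the objectives defining the projections `p`
of `u` and `q` of `v` are `m / η`-strongly convex and differ by the linear form `u - v`, so adding
the two growth inequalities gives `m / η * ‖p - q‖ ^ 2 ≤ (u - v) (q - p)`: the projection is
`η / m`-Lipschitz in the dual variable. Averaging this bound over the iterations and using that `f`
is Lipschitz gives the claim. Only the dual norm of `u - v` enters, so the argument works in any
normed space; the Riesz isometry `innerSL` identifies the dual iterates with vectors in the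
Euclidean case.
-/

section UniformConvexity

open Filter
open scoped Topology

variable {E : Type*} [NormedAddCommGroup E] [NormedSpace ℝ E] {s : Set E} {φ : ℝ → ℝ} {g : E → ℝ}

lemma add_modulus_le_of_uniformConvexOn_of_isMinOn_s5 (hg : UniformConvexOn s φ g) {p q : E}
    (hmin : IsMinOn g s p) (hp : p ∈ s) (hq : q ∈ s) : g p + φ ‖p - q‖ ≤ g q := by
  have hsegment : ∀ t ∈ Set.Ioo (0 : ℝ) 1, g p + (1 - t) * φ ‖p - q‖ ≤ g q := by
    rintro t ⟨ht₀, ht₁⟩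
    have hweights : 1 - t + t = 1 := sub_add_cancel 1 t
    have hle : g p ≤ g ((1 - t) • p + t • q) :=
      hmin (hg.1 hp hq (sub_nonneg.2 ht₁.le) ht₀.le hweights)
    have hconv := hg.2 hp hq (sub_nonneg.2 ht₁.le) ht₀.le hweights
    simp only [smul_eq_mul] at hconv
    refine le_of_mul_le_mul_left ?_ ht₀
    linarith
  have hlim : Tendsto (fun t : ℝ ↦ g p + (1 - t) * φ ‖p - q‖) (𝓝[>] 0)
      (𝓝 (g p + (1 - 0) * φ ‖p - q‖)) :=
    (Continuous.tendsto (by fun_prop) 0).mono_left nhdsWithin_le_nhds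
  rw [sub_zero, one_mul] at hlim
  exact le_of_tendsto hlim (mem_of_superset (Ioo_mem_nhdsGT zero_lt_one) hsegment)

lemma uniformConvexOn_const_smul {c : ℝ} (hc : 0 ≤ c) (hg : UniformConvexOn s φ g) :
    UniformConvexOn s (c • φ) (c • g) := by
  refine ⟨hg.1, fun x hx y hy a b ha hb hab ↦ ?_⟩
  have hscaled := mul_le_mul_of_nonneg_left (hg.2 hx hy ha hb hab) hc
  simp only [Pi.smul_apply, smul_eq_mul] at hscaled ⊢
  linarith

end UniformConvexity

lemma norm_centerMass_sub_centerMass_le {ι E : Type*} [SeminormedAddCommGroup E] [NormedSpace ℝ E]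
    {s : Finset ι} {w r : ι → ℝ} {x y : ι → E} (hw : ∀ k ∈ s, 0 ≤ w k)
    (hr : ∀ k ∈ s, ‖x k - y k‖ ≤ r k) :
    ‖s.centerMass w x - s.centerMass w y‖ ≤ s.centerMass w r := by
  have hinv : 0 ≤ (∑ k ∈ s, w k)⁻¹ := inv_nonneg.2 (sum_nonneg hw)
  simp only [centerMass, ← smul_sub, ← sum_sub_distrib]
  rw [norm_smul_of_nonneg hinv, smul_eq_mul]
  refine mul_le_mul_of_nonneg_left (norm_sum_le_of_le s fun k hk ↦ ?_) hinv
  rw [norm_smul_of_nonneg (hw k hk), smul_eq_mul]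
  exact mul_le_mul_of_nonneg_left (hr k hk) (hw k hk)

/-- The point `p` is a regularized projection `Π_X^ψ(z, η)` of `z`: a minimizer over `X` of
`x ↦ z x + ψ x / η`. It is a predicate on `p`, so that neither existence nor uniqueness of the
minimizer is presupposed; `z` is a continuous linear form, so that no inner product is needed. -/
structure IsRegularizedProj {E : Type*} [NormedAddCommGroup E] [NormedSpace ℝ E]
    (X : Set E) (ψ : E → ℝ) (z : StrongDual ℝ E) (η : ℝ) (p : E) : Prop where
  mem : p ∈ X
  isMinOn : IsMinOn (fun x ↦ z x + ψ x / η) X p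

namespace IsRegularizedProj

variable {E : Type*} [NormedAddCommGroup E] [NormedSpace ℝ E] {X : Set E} {ψ : E → ℝ} {m η : ℝ}
  {u v : StrongDual ℝ E} {p q : E}

lemma quadratic_growth (hψ : StrongConvexOn X m ψ) (hη : 0 ≤ η) (hp : IsRegularizedProj X ψ u η p)
    (hq : q ∈ X) : u p + ψ p / η + m / η / 2 * ‖p - q‖ ^ 2 ≤ u q + ψ q / η := by
  have hobjective := (uniformConvexOn_zero.2 (u.toLinearMap.convexOn hψ.1)).add
    (uniformConvexOn_const_smul (inv_nonneg.2 hη) hψ)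
  have hmin : IsMinOn (⇑u + η⁻¹ • ψ) X p := by
    convert hp.isMinOn using 2 with x
    simp [div_eq_inv_mul]
  have hgrowth := add_modulus_le_of_uniformConvexOn_of_isMinOn_s5 hobjective hmin hp.mem hq
  simp only [Pi.add_apply, Pi.smul_apply, Pi.zero_apply, smul_eq_mul,
    ContinuousLinearMap.coe_coe] at hgrowth
  linear_combination hgrowth

lemma norm_sub_le (hψ : StrongConvexOn X m ψ) (hm : 0 < m) (hη : 0 < η)
    (hp : IsRegularizedProj X ψ u η p) (hq : IsRegularizedProj X ψ v η q) :
    ‖p - q‖ ≤ η / m * ‖u - v‖ := by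
  have hpq := hp.quadratic_growth hψ hη.le hq.mem
  have hqp := hq.quadratic_growth hψ hη.le hp.mem
  rw [norm_sub_rev q p] at hqp
  have hmonotone : m / η * ‖p - q‖ ^ 2 ≤ ‖u - v‖ * ‖p - q‖ :=
    calc m / η * ‖p - q‖ ^ 2 ≤ (u - v) (q - p) := by
          simp only [sub_apply, map_sub]
          linarith
      _ ≤ ‖u - v‖ * ‖q - p‖ := (le_abs_self _).trans ((u - v).le_opNorm _)
      _ = ‖u - v‖ * ‖p - q‖ := by rw [norm_sub_rev q]
  rcases (norm_nonneg (p - q)).eq_or_lt with hzero | hpos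
  · rw [← hzero]
    positivity
  · have hcancel : m / η * ‖p - q‖ ≤ ‖u - v‖ :=
      le_of_mul_le_mul_right (by linarith) hpos
    rwa [← inv_div m η, ← div_eq_inv_mul, le_div_iff₀' (div_pos hm hη)]

end IsRegularizedProj

theorem stmt_5_general {ι E : Type*} [NormedAddCommGroup E] [NormedSpace ℝ E] {X : Set E}
    {ψ f : E → ℝ} {m : ℝ} {L : NNReal} (hm : 0 < m) (hψ : StrongConvexOn X m ψ)
    (hf : LipschitzOnWith L f X) {s : Finset ι} {w η : ι → ℝ} (hw : ∀ k ∈ s, 0 ≤ w k)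
    (hwsum : 0 < ∑ k ∈ s, w k) (hη : ∀ k ∈ s, 0 < η k) {u v : ι → StrongDual ℝ E} {x y : ι → E}
    (hx : ∀ k ∈ s, IsRegularizedProj X ψ (u k) (η k) (x k))
    (hy : ∀ k ∈ s, IsRegularizedProj X ψ (v k) (η k) (y k)) :
    f (s.centerMass w x) ≤
      f (s.centerMass w y) + L * s.centerMass w fun k ↦ η k / m * ‖u k - v k‖ := by
  have hxmem := hψ.1.centerMass_mem hw hwsum fun k hk ↦ (hx k hk).mem
  have hymem := hψ.1.centerMass_mem hw hwsum fun k hk ↦ (hy k hk).mem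
  refine (hf.le_add_mul hxmem hymem).trans ?_
  rw [dist_eq_norm]
  gcongr
  exact norm_centerMass_sub_centerMass_le hw fun k hk ↦
    (hx k hk).norm_sub_le hψ hm (hη k hk) (hy k hk)

/-- Relating the local primal iterates to the centralized ones:
iteration-averaged version: `f(x̂_i(K)) - f(x*) ≤ f(ŷ(K)) - f(x*) + (L/K) Σ_k η(k) ‖z̄(k) - z_i(k)‖`. -/
theorem stmt_5 (d n K : ℕ) (hd : 0 < d) (hn : 0 < n) (hK : 0 < K)
    (X : Set (EuclideanSpace ℝ (Fin d))) (hXc : IsClosed X) (hXconv : Convex ℝ X)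
    (ψ : EuclideanSpace ℝ (Fin d) → ℝ) (hψ : StrongConvexOn X 1 ψ)
    (f : EuclideanSpace ℝ (Fin d) → ℝ) (hfconv : ConvexOn ℝ X f)
    (L : ℝ) (hL : 0 < L) (hLip : ∀ x ∈ X, ∀ y ∈ X, |f x - f y| ≤ L * ‖x - y‖)
    (η : ℕ → ℝ) (hη : ∀ k ∈ Icc 1 K, 0 < η k)
    (z : Fin n → ℕ → EuclideanSpace ℝ (Fin d))
    (zbar : ℕ → EuclideanSpace ℝ (Fin d))
    (hzbar : ∀ k, zbar k = (n : ℝ)⁻¹ • ∑ j : Fin n, z j k)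
    (x : Fin n → ℕ → EuclideanSpace ℝ (Fin d))
    (y : ℕ → EuclideanSpace ℝ (Fin d))
    (hxmem : ∀ i, ∀ k ∈ Icc 1 K, x i k ∈ X)
    (hxmin : ∀ i, ∀ k ∈ Icc 1 K, ∀ w ∈ X,
      ⟪z i k, x i k⟫ + ψ (x i k) / η k ≤ ⟪z i k, w⟫ + ψ w / η k)
    (hymem : ∀ k ∈ Icc 1 K, y k ∈ X)
    (hymin : ∀ k ∈ Icc 1 K, ∀ w ∈ X,
      ⟪zbar k, y k⟫ + ψ (y k) / η k ≤ ⟪zbar k, w⟫ + ψ w / η k) :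
    ∀ i : Fin n, ∀ xstar ∈ X,
      f ((K : ℝ)⁻¹ • ∑ k ∈ Icc 1 K, x i k) - f xstar
        ≤ f ((K : ℝ)⁻¹ • ∑ k ∈ Icc 1 K, y k) - f xstar
          + (L / K) * ∑ k ∈ Icc 1 K, η k * ‖zbar k - z i k‖ := by
  intro i xstar _
  lift L to NNReal using hL.le
  have havg := stmt_5_general (w := 1) (u := fun k ↦ innerSL ℝ (z i k))
    (v := fun k ↦ innerSL ℝ (zbar k)) one_pos hψ
    (.of_dist_le_mul <| by simpa only [dist_eq_norm, Real.norm_eq_abs] using hLip)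
    (by simp) (by simpa using hK) hη (fun k hk ↦ ⟨hxmem i k hk, hxmin i k hk⟩)
    (fun k hk ↦ ⟨hymem k hk, hymin k hk⟩)
  simp only [centerMass, Pi.one_apply, sum_const, Nat.card_Icc, add_tsub_cancel_right,
    nsmul_eq_mul, mul_one, one_smul, div_one, ← map_sub, innerSL_apply_norm,
    norm_sub_rev (z i _), smul_eq_mul, one_mul] at havg
  linear_combination havg
end

section
/- Let P be an n×n symmetric doubly stochastic matrix (nonnegative entries, each row and each column sums to 1) with eigenvalues 1 = λ₁ ≥ λ₂ ≥ … ≥ λ_n, let λ = max{λ₂, -λ_n}, and assume λ < 1. Let 0 < c₀ ≤ 1, 0 < γ < 1, and for t ≥ 1 set β(t) = c₀ t^{-γ} and W(t) = (1 - β(t)) I + β(t) P. Let L > 0 and let z_1, …, z_n : ℕ → ℝ^d satisfy z_i(0) = 0 and z_i(k+1) = Σ_{j=1}^n W(k)_{ij} z_j(k) + g_i(k), where g_i(k) ∈ ℝ^d with ‖g_i(k)‖₂ ≤ L. Set z̄(k) = (1/n) Σ_{j=1}^n z_j(k). Then for every horizon K ≥ 1, every k ∈ {1, …, K}, and every i ∈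 {1,…,n}: ‖z̄(k) - z_i(k)‖₂ ≤ (2L / (c₀ (1 - λ))) · K^γ · log(K √n) + 3L. -/
open Finset Matrix

open WithLp (toLp)

/-! Pairing a zero-sum weight `x` with the recursion moves the mixing matrix onto the weight:
`⟨x, z (k + 1)⟩ = ⟨x W, z k⟩ + ⟨x, g k⟩`. Unrolling, the perturbation made `m` steps before the
last one is weighted by a vector whose `ℓ¹` norm is at most `‖x‖₁`, by stochasticity, and at most
`√n (1 - a) ^ m ‖x‖₂`, by the spectral gap on zero-sum vectors and Cauchy–Schwarz; here
`a = c₀ K ^ (-γ) (1 - λ)`. For `x = n⁻¹ 1 - e_i` the first bound is at most `2`, and it is used for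
the `log (K √n) / a` most recent perturbations; each older one has weight at most `1 / K`. -/

section Eigenbasis

variable {ι 𝕜 E : Type*} [Fintype ι] [RCLike 𝕜] [NormedAddCommGroup E] [InnerProductSpace 𝕜 E]
  {b : OrthonormalBasis ι 𝕜 E} {T : E →ₗ[𝕜] E} {μ : ι → 𝕜}

lemma inner_eigenbasis_apply (hT : ∀ i, T (b i) = μ i • b i) (x : E) (i : ι) :
    inner 𝕜 (b i) (T x) = μ i * inner 𝕜 (b i) x := by
  classical
  conv_lhs => rw [← b.sum_repr' x]
  simp only [map_sum, map_smul, hT, inner_sum, inner_smul_right,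
    orthonormal_iff_ite.mp b.orthonormal]
  simp [mul_comm]

lemma norm_apply_le_of_eigenbasis (hT : ∀ i, T (b i) = μ i • b i) {r : ℝ} (hr : 0 ≤ r) {x : E}
    (hμ : ∀ i, inner 𝕜 (b i) x ≠ 0 → ‖μ i‖ ≤ r) : ‖T x‖ ≤ r * ‖x‖ := by
  refine (sq_le_sq₀ (norm_nonneg _) (by positivity)).mp ?_
  rw [mul_pow, ← b.sum_sq_norm_inner_right, ← b.sum_sq_norm_inner_right, mul_sum]
  refine sum_le_sum fun i _ ↦ ?_
  rw [inner_eigenbasis_apply hT, norm_mul, mul_pow]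
  by_cases hi : inner 𝕜 (b i) x = 0
  · simp [hi]
  · gcongr
    exact hμ i hi

lemma eq_smul_eigenbasis_of_apply_eq_smul (hT : ∀ i, T (b i) = μ i • b i) {ν : 𝕜} {u : E}
    (hu : T u = ν • u) {i₀ : ι} (hν : ∀ i ≠ i₀, μ i ≠ ν) : u = inner 𝕜 (b i₀) u • b i₀ := by
  have inner_eq_zero : ∀ i ≠ i₀, inner 𝕜 (b i) u = 0 := fun i hi ↦ by
    have h := inner_eigenbasis_apply hT u i
    rw [hu, inner_smul_right] at h
    exact (mul_eq_mul_right_iff.mp h).resolve_left (hν i hi).symm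
  conv_lhs => rw [← b.sum_repr' u]
  exact sum_eq_single i₀ (fun i _ hi ↦ by rw [inner_eq_zero i hi, zero_smul]) (by simp)

lemma norm_apply_le_of_inner_eigenvector_eq_zero (hT : ∀ i, T (b i) = μ i • b i) {ν : 𝕜} {u : E}
    (hu : T u = ν • u) (hu0 : u ≠ 0) {i₀ : ι} (hν : ∀ i ≠ i₀, μ i ≠ ν) {r : ℝ} (hr : 0 ≤ r)
    (hμ : ∀ i ≠ i₀, ‖μ i‖ ≤ r) {x : E} (hx : inner 𝕜 u x = 0) : ‖T x‖ ≤ r * ‖x‖ := by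
  refine norm_apply_le_of_eigenbasis hT hr fun i hi ↦ hμ i ?_
  rintro rfl
  have hu_eq := eq_smul_eigenbasis_of_apply_eq_smul hT hu hν
  have hcoeff : inner 𝕜 (b i) u ≠ 0 := fun h ↦ hu0 (by rw [hu_eq, h, zero_smul])
  rw [hu_eq, inner_smul_left, mul_eq_zero, map_eq_zero] at hx
  exact hx.elim hcoeff hi

end Eigenbasis

lemma abs_le_max_of_antitone {n : ℕ} {μ : Fin n → ℝ} (hμ : Antitone μ) (hn : 2 ≤ n)
    {i : Fin n} (hi : i ≠ ⟨0, by omega⟩) :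
    |μ i| ≤ max (μ ⟨1, by omega⟩) (-(μ ⟨n - 1, by omega⟩)) := by
  have hi0 : i.val ≠ 0 := fun h ↦ hi (Fin.ext h)
  have le_second : μ i ≤ μ ⟨1, by omega⟩ := hμ (Fin.mk_le_of_le_val (by omega))
  have last_le : μ ⟨n - 1, by omega⟩ ≤ μ i := hμ (Fin.le_def.mpr (by grind))
  exact abs_le.mpr ⟨by linarith [le_max_right (μ ⟨1, by omega⟩) (-μ ⟨n - 1, by omega⟩)],
    le_second.trans (le_max_left _ _)⟩

section Weights

variable {ι : Type*} [Fintype ι]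

lemma norm_toLp_one_le_sqrt_card_mul (x : ι → ℝ) :
    ‖toLp 1 x‖ ≤ √(Fintype.card ι) * ‖toLp 2 x‖ := by
  refine (sq_le_sq₀ (norm_nonneg _) (by positivity)).mp ?_
  rw [mul_pow, Real.sq_sqrt (by positivity), EuclideanSpace.norm_sq_eq, PiLp.norm_eq_of_L1]
  exact sq_sum_le_card_mul_sum_sq

lemma norm_sum_smul_le_norm_toLp_one_mul {E : Type*} [SeminormedAddCommGroup E] [NormedSpace ℝ E]
    (x : ι → ℝ) {y : ι → E} {L : ℝ} (hy : ∀ i, ‖y i‖ ≤ L) :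
    ‖∑ i, x i • y i‖ ≤ ‖toLp 1 x‖ * L := by
  rw [PiLp.norm_eq_of_L1, sum_mul]
  refine norm_sum_le_of_le _ fun i _ ↦ ?_
  rw [norm_smul]
  gcongr
  exact hy i

lemma sum_smul_sum_smul_eq_sum_vecMul_smul {κ R M : Type*} [Fintype κ] [Semiring R]
    [AddCommMonoid M] [Module R M] (x : ι → R) (W : Matrix ι κ R) (y : κ → M) :
    ∑ i, x i • ∑ j, W i j • y j = ∑ j, (x ᵥ* W) j • y j := by
  simp only [smul_sum, smul_smul, vecMul, dotProduct, sum_smul]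
  exact sum_comm

/-- `r` is a contraction factor, for the Euclidean norm, of `W` acting on zero-sum row vectors. For
a symmetric stochastic `W` the best one is the second largest eigenvalue magnitude. -/
def ContractsZeroSum (W : Matrix ι ι ℝ) (r : ℝ) : Prop :=
  ∀ x : ι → ℝ, ∑ i, x i = 0 → ‖toLp 2 (x ᵥ* W)‖ ≤ r * ‖toLp 2 x‖

lemma ContractsZeroSum.mono {W : Matrix ι ι ℝ} {r s : ℝ} (hW : ContractsZeroSum W r)
    (hrs : r ≤ s) : ContractsZeroSum W s := fun x hx ↦
  (hW x hx).trans (by gcongr)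

variable [DecidableEq ι]

lemma sum_vecMul_of_mem_rowStochastic {R : Type*} [Semiring R] [PartialOrder R]
    [IsOrderedRing R] {W : Matrix ι ι R} (hW : W ∈ rowStochastic R ι) (x : ι → R) :
    ∑ j, (x ᵥ* W) j = ∑ i, x i := by
  rw [← dotProduct_one, ← dotProduct_mulVec, (mem_rowStochastic.mp hW).2, dotProduct_one]

lemma norm_toLp_one_vecMul_le_of_mem_rowStochastic {W : Matrix ι ι ℝ}
    (hW : W ∈ rowStochastic ℝ ι) (x : ι → ℝ) : ‖toLp 1 (x ᵥ* W)‖ ≤ ‖toLp 1 x‖ := by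
  simp only [PiLp.norm_eq_of_L1, Real.norm_eq_abs]
  calc ∑ j, |∑ i, x i * W i j|
      ≤ ∑ j, ∑ i, |x i| * W i j := sum_le_sum fun j _ ↦
        (abs_sum_le_sum_abs _ _).trans_eq <| sum_congr rfl fun i _ ↦ by
          rw [abs_mul, abs_of_nonneg (nonneg_of_mem_rowStochastic hW)]
    _ = ∑ i, |x i| * ∑ j, W i j := by simp only [mul_sum]; exact sum_comm
    _ = ∑ i, |x i| := by simp only [sum_row_of_mem_rowStochastic hW, mul_one]

/-- The weights expressing the deviation of node `i` from the average: `∑ j, x j • z j` is the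
average of `z` minus `z i`. -/
noncomputable def deviationWeights (i j : ι) : ℝ :=
  (Fintype.card ι : ℝ)⁻¹ - if j = i then 1 else 0

lemma sum_deviationWeights_smul {E : Type*} [AddCommGroup E] [Module ℝ E] (y : ι → E) (i : ι) :
    ∑ j, deviationWeights i j • y j = (Fintype.card ι : ℝ)⁻¹ • ∑ j, y j - y i := by
  simp [deviationWeights, sub_smul, smul_sum]

lemma sum_deviationWeights (i : ι) : ∑ j, deviationWeights i j = 0 := by
  have : Nonempty ι := ⟨i⟩
  simp [deviationWeights]

lemma norm_toLp_one_deviationWeights_le (i : ι) : ‖toLp 1 (deviationWeights i)‖ ≤ 2 := by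
  have : Nonempty ι := ⟨i⟩
  rw [PiLp.norm_eq_of_L1]
  calc ∑ j, ‖deviationWeights i j‖
      ≤ ∑ j, ((Fintype.card ι : ℝ)⁻¹ + if j = i then 1 else 0) := sum_le_sum fun j _ ↦
        (norm_sub_le _ _).trans_eq (by split_ifs <;> simp)
    _ = 2 := by simp [sum_add_distrib, one_add_one_eq_two]

lemma norm_toLp_two_deviationWeights_le (i : ι) : ‖toLp 2 (deviationWeights i)‖ ≤ 1 := by
  refine (sq_le_one_iff₀ (norm_nonneg _)).mp ?_
  rw [EuclideanSpace.real_norm_sq_eq]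
  calc ∑ j, deviationWeights i j ^ 2
      = ∑ j, deviationWeights i j • deviationWeights i j := by simp only [smul_eq_mul, sq]
    _ = 1 - (Fintype.card ι : ℝ)⁻¹ := by
      rw [sum_deviationWeights_smul, sum_deviationWeights]
      simp [deviationWeights]
    _ ≤ 1 := sub_le_self _ (by positivity)

lemma ContractsZeroSum.lazy {P : Matrix ι ι ℝ} {r b : ℝ} (hP : ContractsZeroSum P r)
    (hb0 : 0 ≤ b) (hb1 : b ≤ 1) :
    ContractsZeroSum ((1 - b) • 1 + b • P) (1 - b * (1 - r)) := fun x hx ↦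
  calc ‖toLp 2 (x ᵥ* ((1 - b) • 1 + b • P))‖
      = ‖(1 - b) • toLp 2 x + b • toLp 2 (x ᵥ* P)‖ := by
        rw [vecMul_add, vecMul_smul, vecMul_smul, vecMul_one]; rfl
    _ ≤ (1 - b) * ‖toLp 2 x‖ + b * (r * ‖toLp 2 x‖) := by
        refine norm_add_le_of_le ?_ ?_
        · rw [norm_smul, Real.norm_of_nonneg (sub_nonneg.mpr hb1)]
        · rw [norm_smul, Real.norm_of_nonneg hb0]
          gcongr
          exact hP x hx
    _ = (1 - b * (1 - r)) * ‖toLp 2 x‖ := by ring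

end Weights

lemma contractsZeroSum_of_orthonormal_eigenvectors {ι : Type*} [Fintype ι] [DecidableEq ι]
    {P : Matrix ι ι ℝ} (hsym : P.IsSymm) (hrow : ∀ i, ∑ j, P i j = 1) {μ : ι → ℝ}
    {v : ι → ι → ℝ} (hv : ∀ i j, v i ⬝ᵥ v j = if i = j then (1 : ℝ) else 0)
    (heig : ∀ i, P *ᵥ v i = μ i • v i) {i₀ : ι} {r : ℝ} (hr0 : 0 ≤ r) (hr1 : r < 1)
    (hμ : ∀ i ≠ i₀, |μ i| ≤ r) : ContractsZeroSum P r := by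
  intro x hx
  have horth : Orthonormal ℝ fun i ↦ (toLp 2 (v i) : EuclideanSpace ℝ ι) := by
    rw [orthonormal_iff_ite]
    intro i j
    simp [EuclideanSpace.inner_toLp_toLp, dotProduct_comm (v j), hv]
  let b : OrthonormalBasis ι ℝ (EuclideanSpace ℝ ι) := .mk horth
    (horth.linearIndependent.span_eq_top_of_card_eq_finrank' (by simp)).ge
  have hT : ∀ i, toLpLin 2 2 P (b i) = μ i • b i := fun i ↦ by
    simp [b, toLpLin_toLp, heig]
  have hone : toLpLin 2 2 P (toLp 2 1) = (1 : ℝ) • toLp 2 1 := by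
    rw [toLpLin_toLp, one_smul]
    congr 1
    ext i
    simp [mulVec, dotProduct_one, hrow]
  have hone_ne : (toLp 2 1 : EuclideanSpace ℝ ι) ≠ 0 := by
    have : Nonempty ι := ⟨i₀⟩
    simp
  have hx_orth : inner ℝ (toLp 2 (1 : ι → ℝ)) (toLp 2 x) = 0 := by
    simpa [EuclideanSpace.inner_toLp_toLp, dotProduct] using hx
  rw [← mulVec_transpose, hsym.eq]
  exact norm_apply_le_of_inner_eigenvector_eq_zero hT hone hone_ne
    (fun i hi ↦ ((le_abs_self _).trans_lt ((hμ i hi).trans_lt hr1)).ne) hr0 hμ hx_orth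

section TruncatedGeometricSum

lemma sum_range_min_le {f : ℕ → ℝ} {c ε : ℝ} (hc : 0 ≤ c) (hε : 0 ≤ ε) {T : ℕ}
    (hf : ∀ m, T ≤ m → f m ≤ ε) (k : ℕ) : ∑ m ∈ range k, min c (f m) ≤ T * c + k * ε := by
  have hterm : ∀ m, min c (f m) ≤ (if m < T then c else 0) + ε := fun m ↦ by
    split_ifs with hm
    · exact (min_le_left _ _).trans (le_add_of_nonneg_right hε)
    · simpa using Or.inr (hf m (not_lt.mp hm))
  have hcard : #{m ∈ range k | m < T} ≤ T := by
    simpa using card_le_card (show {m ∈ range k | m < T} ⊆ range T by grind)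
  calc ∑ m ∈ range k, min c (f m)
      ≤ ∑ m ∈ range k, ((if m < T then c else 0) + ε) := sum_le_sum fun m _ ↦ hterm m
    _ = #{m ∈ range k | m < T} * c + k * ε := by
      simp [sum_add_distrib, ← sum_filter]
    _ ≤ T * c + k * ε := by gcongr

lemma mul_one_sub_pow_le_inv {a s N : ℝ} (ha : a ≤ 1) (hs : 0 < s) (hN : 0 < N) {m : ℕ}
    (hm : Real.log (N * s) ≤ m * a) : s * (1 - a) ^ m ≤ N⁻¹ :=
  calc s * (1 - a) ^ m
      ≤ s * Real.exp (-a) ^ m := by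
        gcongr
        exact Real.one_sub_le_exp_neg a
    _ = s * Real.exp (-(m * a)) := by rw [← Real.exp_nat_mul, mul_neg]
    _ ≤ s * Real.exp (-Real.log (N * s)) := by gcongr
    _ = N⁻¹ := by rw [Real.exp_neg, Real.exp_log (by positivity)]; field_simp

lemma sum_range_min_geometric_le {a s c N : ℝ} (ha0 : 0 < a) (ha1 : a ≤ 1) (hs : 0 < s)
    (hc : 0 ≤ c) (hN : 0 < N) (hNs : 1 ≤ N * s) {k : ℕ} (hk : k ≤ N) :
    ∑ m ∈ range k, min c (s * (1 - a) ^ m) ≤ (Real.log (N * s) / a + 1) * c + 1 := by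
  have hlog : 0 ≤ Real.log (N * s) := Real.log_nonneg hNs
  have htail : ∀ m, ⌈Real.log (N * s) / a⌉₊ ≤ m → s * (1 - a) ^ m ≤ N⁻¹ := fun m hm ↦
    mul_one_sub_pow_le_inv ha1 hs hN ((div_le_iff₀ ha0).mp (Nat.ceil_le.mp hm))
  refine (sum_range_min_le hc (inv_nonneg.mpr hN.le) htail k).trans ?_
  gcongr
  · exact (Nat.ceil_lt_add_one (by positivity)).le
  · exact mul_inv_le_one_of_le₀ hk hN.le

end TruncatedGeometricSum

section PerturbedConsensus

variable {ι E : Type*} [Fintype ι] [DecidableEq ι] [SeminormedAddCommGroup E] [NormedSpace ℝ E]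
  {W : ℕ → Matrix ι ι ℝ} {z g : ι → ℕ → E} {L : ℝ}

lemma norm_sum_smul_le_sum_min {r : ℝ} (hr : 0 ≤ r) (hz0 : ∀ i, z i 0 = 0)
    (hg : ∀ i k, ‖g i k‖ ≤ L) (hrec : ∀ i k, z i (k + 1) = (∑ j, W k i j • z j k) + g i k) {k : ℕ}
    (hk : 1 ≤ k) (hstoch : ∀ t ∈ Ico 1 k, W t ∈ rowStochastic ℝ ι)
    (hcontr : ∀ t ∈ Ico 1 k, ContractsZeroSum (W t) r) {x : ι → ℝ} (hx : ∑ i, x i = 0) :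
    ‖∑ i, x i • z i k‖ ≤
      (∑ m ∈ range k, min ‖toLp 1 x‖ (√(Fintype.card ι) * (r ^ m * ‖toLp 2 x‖))) * L := by
  cases isEmpty_or_nonempty ι
  · simp [Subsingleton.elim x 0]
  have hperturb (x : ι → ℝ) (k : ℕ) : ‖∑ i, x i • g i k‖ ≤
      min ‖toLp 1 x‖ (√(Fintype.card ι) * (r ^ 0 * ‖toLp 2 x‖)) * L := by
    rw [pow_zero, one_mul, min_eq_left (norm_toLp_one_le_sqrt_card_mul x)]
    exact norm_sum_smul_le_norm_toLp_one_mul x fun i ↦ hg i k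
  have hL : 0 ≤ L := (norm_nonneg _).trans (hg (Classical.arbitrary ι) 0)
  induction k, hk using Nat.le_induction generalizing x with
  | base => simpa [hrec, hz0] using hperturb x 0
  | succ k hk ih =>
    have hW := hstoch k (by simpa using hk)
    have hsplit : ∑ i, x i • z i (k + 1) = ∑ i, (x ᵥ* W k) i • z i k + ∑ i, x i • g i k := by
      simp only [hrec, smul_add, sum_add_distrib, sum_smul_sum_smul_eq_sum_vecMul_smul]
    have hpast := ih (fun t ht ↦ hstoch t (by grind)) (fun t ht ↦ hcontr t (by grind))
      ((sum_vecMul_of_mem_rowStochastic hW x).trans hx)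
    rw [hsplit, sum_range_succ', add_mul]
    refine norm_add_le_of_le (hpast.trans ?_) (hperturb x k)
    gcongr ?_ * L
    refine sum_le_sum fun m _ ↦ min_le_min
      (norm_toLp_one_vecMul_le_of_mem_rowStochastic hW x) ?_
    rw [pow_succ, mul_assoc]
    gcongr
    exact hcontr k (by simpa using hk) x hx

theorem norm_average_sub_le_of_le_confidence {P : Matrix ι ι ℝ} (hP : P ∈ rowStochastic ℝ ι)
    {r : ℝ} (hr0 : 0 ≤ r) (hr1 : r < 1) (hcontr : ContractsZeroSum P r) {β : ℕ → ℝ} {b : ℝ}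
    (hb : 0 < b) {K : ℕ} (hbβ : ∀ t ∈ Icc 1 K, b ≤ β t) (hβ1 : ∀ t ∈ Icc 1 K, β t ≤ 1)
    (hW : ∀ t ∈ Icc 1 K, W t = (1 - β t) • 1 + β t • P) (hz0 : ∀ i, z i 0 = 0)
    (hg : ∀ i k, ‖g i k‖ ≤ L) (hrec : ∀ i k, z i (k + 1) = (∑ j, W k i j • z j k) + g i k)
    {k : ℕ} (hk : k ∈ Icc 1 K) (i : ι) :
    ‖(Fintype.card ι : ℝ)⁻¹ • ∑ j, z j k - z i k‖ ≤
      ((Real.log (K * √(Fintype.card ι)) / (b * (1 - r)) + 1) * 2 + 1) * L := by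
  have : Nonempty ι := ⟨i⟩
  obtain ⟨hk1, hkK⟩ := mem_Icc.mp hk
  have hL : 0 ≤ L := (norm_nonneg _).trans (hg i 0)
  have hK : (1 : ℝ) ≤ K := by exact_mod_cast hk1.trans hkK
  have hcard : 1 ≤ √(Fintype.card ι : ℝ) :=
    Real.one_le_sqrt.mpr (by exact_mod_cast Fintype.card_pos)
  have hrate0 : 0 < b * (1 - r) := mul_pos hb (sub_pos.mpr hr1)
  have hrate1 : b * (1 - r) ≤ 1 :=
    mul_le_one₀ ((hbβ k hk).trans (hβ1 k hk)) (by linarith) (by linarith)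
  have hW_stoch : ∀ t ∈ Icc 1 K, W t ∈ rowStochastic ℝ ι := fun t ht ↦ by
    rw [hW t ht]
    exact convex_rowStochastic (one_mem _) hP (sub_nonneg.mpr (hβ1 t ht))
      (hb.le.trans (hbβ t ht)) (sub_add_cancel _ _)
  have hW_contr : ∀ t ∈ Icc 1 K, ContractsZeroSum (W t) (1 - b * (1 - r)) := fun t ht ↦ by
    rw [hW t ht]
    refine (hcontr.lazy (hb.le.trans (hbβ t ht)) (hβ1 t ht)).mono ?_
    gcongr
    exact hbβ t ht
  have hsum := norm_sum_smul_le_sum_min (sub_nonneg.mpr hrate1) hz0 hg hrec hk1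
    (fun t ht ↦ hW_stoch t (by grind)) (fun t ht ↦ hW_contr t (by grind)) (sum_deviationWeights i)
  rw [sum_deviationWeights_smul] at hsum
  refine hsum.trans (mul_le_mul_of_nonneg_right ?_ hL)
  refine le_trans (sum_le_sum fun m _ ↦ ?_) (sum_range_min_geometric_le hrate0 hrate1
    (zero_lt_one.trans_le hcard) zero_le_two (by linarith) (one_le_mul_of_one_le_of_one_le hK hcard)
    (Nat.cast_le.mpr hkK))
  gcongr
  · exact norm_toLp_one_deviationWeights_le i
  · exact mul_le_of_le_one_right (by positivity) (norm_toLp_two_deviationWeights_le i)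

theorem stmt_11_general {P : Matrix ι ι ℝ} (hP : P ∈ rowStochastic ℝ ι)
    {lam : ℝ} (hlam0 : 0 ≤ lam) (hlam1 : lam < 1) (hcontr : ContractsZeroSum P lam)
    {c₀ γ : ℝ} (hc₀ : 0 < c₀) (hc₀1 : c₀ ≤ 1) (hγ : 0 ≤ γ)
    {β : ℕ → ℝ} (hβ : ∀ t : ℕ, 1 ≤ t → β t = c₀ * (t : ℝ) ^ (-γ))
    (hW : ∀ t : ℕ, 1 ≤ t → W t = (1 - β t) • 1 + β t • P)
    (hz0 : ∀ i, z i 0 = 0) (hg : ∀ i k, ‖g i k‖ ≤ L)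
    (hrec : ∀ i k, z i (k + 1) = (∑ j, W k i j • z j k) + g i k)
    {K k : ℕ} (hk : k ∈ Icc 1 K) (i : ι) :
    ‖(Fintype.card ι : ℝ)⁻¹ • ∑ j, z j k - z i k‖ ≤
      (2 * L / (c₀ * (1 - lam))) * (K : ℝ) ^ γ * Real.log (K * √(Fintype.card ι)) + 3 * L := by
  have hK : (0 : ℝ) < K := by
    obtain ⟨hk1, hkK⟩ := mem_Icc.mp hk
    exact_mod_cast hk1.trans hkK
  have hconf_ge : ∀ t ∈ Icc 1 K, c₀ * (K : ℝ) ^ (-γ) ≤ β t := fun t ht ↦ by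
    obtain ⟨ht1, htK⟩ := mem_Icc.mp ht
    rw [hβ t ht1]
    gcongr ?_ * ?_
    exact Real.rpow_le_rpow_of_nonpos (by exact_mod_cast ht1) (by exact_mod_cast htK) (by linarith)
  have hconf_le_one : ∀ t ∈ Icc 1 K, β t ≤ 1 := fun t ht ↦ by
    obtain ⟨ht1, -⟩ := mem_Icc.mp ht
    rw [hβ t ht1]
    exact mul_le_one₀ hc₀1 (by positivity)
      (Real.rpow_le_one_of_one_le_of_nonpos (by exact_mod_cast ht1) (by linarith))
  refine (norm_average_sub_le_of_le_confidence hP hlam0 hlam1 hcontr (by positivity) hconf_ge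
    hconf_le_one (fun t ht ↦ hW t (mem_Icc.mp ht).1) hz0 hg hrec hk i).trans_eq ?_
  have hgap : 1 - lam ≠ 0 := by linarith
  rw [Real.rpow_neg hK.le]
  field_simp
  ring

end PerturbedConsensus

/-- Network consensus error bound for decentralized lazy mirror descent with
diminishing confidences (exact oracle, noiseless channels, infinite data rate):
`‖z̄(k) - z_i(k)‖ ≤ (2L/(c₀(1-λ))) K^γ log(K√n) + 3L`. -/
theorem stmt_11 (n d : ℕ) (hn : 2 ≤ n) (hd : 0 < d)
    (P : Matrix (Fin n) (Fin n) ℝ) (hsym : P.IsSymm)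
    (hnonneg : ∀ i j, 0 ≤ P i j)
    (hrow : ∀ i, ∑ j, P i j = 1) (hcol : ∀ j, ∑ i, P i j = 1)
    -- the eigenvalues of `P`, sorted in nonincreasing order, with orthonormal eigenvectors
    (μ : Fin n → ℝ) (hmono : Antitone μ) (hμ0 : μ ⟨0, by omega⟩ = 1)
    (v : Fin n → (Fin n → ℝ))
    (hON : ∀ i j, v i ⬝ᵥ v j = if i = j then (1 : ℝ) else 0)
    (heig : ∀ i, P.mulVec (v i) = μ i • v i)
    (lam : ℝ) (hlam : lam = max (μ ⟨1, by omega⟩) (-(μ ⟨n - 1, by omega⟩)))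
    (hlam1 : lam < 1)
    (c₀ γ : ℝ) (hc₀ : 0 < c₀) (hc₀1 : c₀ ≤ 1) (hγ : 0 < γ) (hγ1 : γ < 1)
    (β : ℕ → ℝ) (hβ : ∀ t : ℕ, 1 ≤ t → β t = c₀ * (t : ℝ) ^ (-γ))
    (W : ℕ → Matrix (Fin n) (Fin n) ℝ)
    (hW : ∀ t : ℕ, 1 ≤ t → W t = (1 - β t) • (1 : Matrix (Fin n) (Fin n) ℝ) + β t • P)
    (L : ℝ) (hL : 0 < L)
    (z : Fin n → ℕ → EuclideanSpace ℝ (Fin d))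
    (g : Fin n → ℕ → EuclideanSpace ℝ (Fin d))
    (hz0 : ∀ i, z i 0 = 0)
    (hgbound : ∀ i k, ‖g i k‖ ≤ L)
    (hrec : ∀ i k, z i (k + 1) = (∑ j : Fin n, W k i j • z j k) + g i k)
    (zbar : ℕ → EuclideanSpace ℝ (Fin d))
    (hzbar : ∀ k, zbar k = (n : ℝ)⁻¹ • ∑ j : Fin n, z j k) :
    ∀ K : ℕ, 1 ≤ K → ∀ k ∈ Icc 1 K, ∀ i : Fin n,
      ‖zbar k - z i k‖
        ≤ (2 * L / (c₀ * (1 - lam))) * (K : ℝ) ^ γ * Real.log (K * Real.sqrt n)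
          + 3 * L := by
  intro K _ k hk i
  have hμ : ∀ i ≠ ⟨0, by omega⟩, |μ i| ≤ lam := fun i hi ↦
    hlam ▸ abs_le_max_of_antitone hmono hn hi
  have hlam0 : 0 ≤ lam := (abs_nonneg _).trans (hμ ⟨1, by omega⟩ (by simp))
  have hcontr : ContractsZeroSum P lam :=
    contractsZeroSum_of_orthonormal_eigenvectors hsym hrow hON heig hlam0 hlam1 hμ
  simpa [hzbar] using stmt_11_general (mem_rowStochastic_iff_sum.mpr ⟨hnonneg, hrow⟩) hlam0 hlam1
    hcontr hc₀ hc₀1 hγ.le hβ hW hz0 hgbound hrec hk i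
end

section
/- Let d, n, K be positive integers. Let (Ω, F, ℙ) be a probability space with a filtration (F_k)_{k≥0}. Let X ⊆ ℝ^d be a closed convex set with 0 ∈ X, and ψ : ℝ^d → ℝ 1-strongly convex on X with respect to the Euclidean norm, with ψ ≥ 0 on X and ψ(0) = 0. Let f_1, …, f_n : ℝ^d → ℝ be convex and L-Lipschitz on X with respect to the Euclidean norm, and f = (1/n) Σ_i f_i. Let η(0) ≥ η(1) ≥ … ≥ η(K) > 0 be nonincreasing, and for each k ∈ {1,…,K} let W(k) be a (deterministic) n×n doubly stochastic matrix. Let z_i(k), ĝ_i(k) be random vectors in ℝ^d with z_i(1) = 0, ĝ_i(k) F_k-measurable, and z_i(k+1) = Σ_{j=1}^n W(k)_{ij} z_j(k) + ĝ_i(k); set z̄(k) = (1/n) Σ_j z_j(k). For each k and i let x_i(k) ∈ X be the minimizer over X of x ↦ ⟨z_i(k), x⟩ + ψ(x)/η(k), and y(k) ∈ X the minimizer of x ↦ ⟨z̄(k), x⟩ + ψ(x)/η(k). Suppose there is ξ > 0 such that almost surely, for all i and k: E[ĝ_i(k) | F_{k-1}] is a subgradient of f_i at x_i(k) (i.e.,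 for all w ∈ X, f_i(w) ≥ f_i(x_i(k)) + ⟨E[ĝ_i(k)|F_{k-1}], w - x_i(k)⟩), and E[‖ĝ_i(k)‖₂² | F_{k-1}] ≤ ξ². Then for every x* ∈ X and every i ∈ {1,…,n}, with x̂_i(K) = (1/K) Σ_{k=1}^K x_i(k): E[f(x̂_i(K))] - f(x*) ≤ ψ(x*)/(K η(K)) + (ξ²/(2K)) Σ_{k=1}^K η(k-1) + ((L + ξ)/(nK)) Σ_{k=1}^K Σ_{j=1}^n η(k) E‖z̄(k) - z_j(k)‖₂ + (L/K) Σ_{k=1}^K η(k) E‖z̄(k) - z_i(k)‖₂. -/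
open MeasureTheory Finset Matrix
open scoped RealInnerProductSpace

/-!
Mixing the dual states with a matrix whose columns sum to `1` preserves their node average, so the
averaged dual state is the sum of the averaged increments, and its projections `y k` are dual
averaging run on those increments. By the usual potential argument each round then costs
`η k * ‖increment‖ ^ 2 / (2 * m)`, and the final potential costs `ψ w / η K`.

Strong convexity also makes the projection `η / m`-Lipschitz in the dual variable. Hence the primal
points inherit measurability and integrability from the dual states, and `‖y k - x j k‖` is bounded
by the consensus error, so a subgradient taken at `x j k` may be charged at `y k` for an extra
`(L + ξ) * ‖y k - x j k‖`. Since `y k` depends only on the past, the conditional mean of the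
increment may be replaced by the increment itself under the integral. Jensen's inequality passes to
the averaged iterate.
-/

section MirrorProjection

theorem uniformConvexOn_add_modulus_le_of_isMinOn {E : Type*} [NormedAddCommGroup E]
    [NormedSpace ℝ E] {s : Set E} {φ : ℝ → ℝ} {f : E → ℝ} (hf : UniformConvexOn s φ f) {a b : E}
    (ha : a ∈ s) (hb : b ∈ s) (hmin : IsMinOn f s a) : f a + φ ‖a - b‖ ≤ f b := by
  have chord : ∀ t ∈ Set.Ioo (0 : ℝ) 1, f a + (1 - t) * φ ‖a - b‖ ≤ f b := by
    rintro t ⟨ht0, ht1⟩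
    have hmem := hf.1 ha hb (sub_nonneg.2 ht1.le) ht0.le (sub_add_cancel 1 t)
    have hconv := hf.2 ha hb (sub_nonneg.2 ht1.le) ht0.le (sub_add_cancel 1 t)
    simp only [smul_eq_mul] at hconv
    refine le_of_mul_le_mul_left ?_ ht0
    linarith [isMinOn_iff.1 hmin _ hmem]
  have hlim : Filter.Tendsto (fun t : ℝ => f a + (1 - t) * φ ‖a - b‖) (nhdsWithin 0 (Set.Ioi 0))
      (nhds (f a + (1 - 0) * φ ‖a - b‖)) :=
    (Continuous.tendsto (by fun_prop) 0).mono_left nhdsWithin_le_nhds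
  rw [sub_zero, one_mul] at hlim
  exact le_of_tendsto hlim (Filter.eventually_of_mem (Ioo_mem_nhdsGT zero_lt_one) chord)

variable {E : Type*} [NormedAddCommGroup E] [InnerProductSpace ℝ E]
  {X : Set E} {ψ : E → ℝ} {m η : ℝ} {z z' p q w : E}

theorem strongConvexOn_inner_add_div (hψ : StrongConvexOn X m ψ) (hη : 0 < η) (z : E) :
    StrongConvexOn X (m / η) fun w => ⟪z, w⟫ + ψ w / η := by
  refine ⟨hψ.1, fun u hu v hv a b ha hb hab => ?_⟩
  have hconv := div_le_div_of_nonneg_right (hψ.2 hu hv ha hb hab) hη.le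
  have hexpand : (a • ψ u + b • ψ v - a * b * (m / 2 * ‖u - v‖ ^ 2)) / η
      = a * (ψ u / η) + b * (ψ v / η) - a * b * (m / η / 2 * ‖u - v‖ ^ 2) := by
    simp only [smul_eq_mul]
    ring
  simp only [inner_add_right, real_inner_smul_right, smul_eq_mul]
  linarith

/-- `IsMirrorProjection X ψ η z p` says that `p` is a projection `Π_X^ψ(z, η)`: a minimizer over `X`
of `x ↦ ⟪z, x⟫ + ψ x / η`. It is a relation because minimizers need neither exist nor be unique for
arbitrary `X` and `ψ`. -/
def IsMirrorProjection (X : Set E) (ψ : E → ℝ) (η : ℝ) (z p : E) : Prop :=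
  p ∈ X ∧ ∀ w ∈ X, ⟪z, p⟫ + ψ p / η ≤ ⟪z, w⟫ + ψ w / η

namespace IsMirrorProjection

theorem add_norm_sub_sq_le (hψ : StrongConvexOn X m ψ) (hη : 0 < η)
    (hp : IsMirrorProjection X ψ η z p) (hw : w ∈ X) :
    ⟪z, p⟫ + ψ p / η + m / (2 * η) * ‖p - w‖ ^ 2 ≤ ⟪z, w⟫ + ψ w / η := by
  have hgrowth := uniformConvexOn_add_modulus_le_of_isMinOn
    (strongConvexOn_inner_add_div hψ hη z) hp.1 hw (isMinOn_iff.2 hp.2)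
  rwa [div_div, mul_comm η] at hgrowth

theorem norm_sub_le (hψ : StrongConvexOn X m ψ) (hm : 0 < m) (hη : 0 < η)
    (hp : IsMirrorProjection X ψ η z p) (hq : IsMirrorProjection X ψ η z' q) :
    ‖p - q‖ ≤ η / m * ‖z - z'‖ := by
  have hgrowth : m / η * ‖p - q‖ ^ 2 ≤ ⟪z - z', q - p⟫ := by
    have hpq := hp.add_norm_sub_sq_le hψ hη hq.1
    have hqp := hq.add_norm_sub_sq_le hψ hη hp.1
    rw [norm_sub_rev q p] at hqp
    simp only [inner_sub_left, inner_sub_right]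
    linarith [show m / η * ‖p - q‖ ^ 2 = 2 * (m / (2 * η) * ‖p - q‖ ^ 2) by field_simp]
  have hcauchy : ⟪z - z', q - p⟫ ≤ ‖z - z'‖ * ‖p - q‖ :=
    norm_sub_rev p q ▸ real_inner_le_norm _ _
  rcases (norm_nonneg (p - q)).eq_or_lt with hzero | hpos
  · rw [← hzero]
    positivity
  · have hmul : m / η * ‖p - q‖ ≤ ‖z - z'‖ :=
      le_of_mul_le_mul_right (by linarith) hpos
    rwa [← le_div_iff₀' (by positivity), div_eq_inv_mul, inv_div] at hmul

theorem add_inner_le (hψ : StrongConvexOn X m ψ) (hm : 0 < m) (hη : 0 < η)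
    (hp : IsMirrorProjection X ψ η z p) (hw : w ∈ X) (g : E) :
    ⟪z, p⟫ + ψ p / η + ⟪g, p⟫ ≤ ⟪z + g, w⟫ + ψ w / η + η / (2 * m) * ‖g‖ ^ 2 := by
  have hgrowth := hp.add_norm_sub_sq_le hψ hη hw
  have hcauchy : ⟪g, p⟫ - ⟪g, w⟫ ≤ ‖g‖ * ‖p - w‖ := by
    rw [← inner_sub_right]
    exact real_inner_le_norm _ _
  have hyoung : ‖g‖ * ‖p - w‖ ≤ η / (2 * m) * ‖g‖ ^ 2 + m / (2 * η) * ‖p - w‖ ^ 2 := by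
    have hsq : η / (2 * m) * ‖g‖ ^ 2 + m / (2 * η) * ‖p - w‖ ^ 2 - ‖g‖ * ‖p - w‖
        = (η * ‖g‖ - m * ‖p - w‖) ^ 2 / (2 * m * η) := by
      field_simp
      ring
    exact sub_nonneg.1 (hsq ▸ by positivity)
  rw [inner_add_left]
  linarith

end IsMirrorProjection

end MirrorProjection

section DualAveraging

variable {E : Type*} [NormedAddCommGroup E] [InnerProductSpace ℝ E]
  {X : Set E} {ψ : E → ℝ} {m : ℝ} {K : ℕ} {η : ℕ → ℝ} {g y : ℕ → E}

theorem dualAveraging_sum_inner_le (hψ : StrongConvexOn X m ψ) (hm : 0 < m)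
    (hψ_nonneg : ∀ u ∈ X, 0 ≤ ψ u) (hK : 1 ≤ K) (hη_pos : ∀ k ∈ Icc 1 K, 0 < η k)
    (hη_anti : ∀ k ∈ Ico 1 K, η (k + 1) ≤ η k)
    (hy : ∀ k ∈ Icc 1 K, IsMirrorProjection X ψ (η k) (∑ l ∈ Ico 1 k, g l) (y k)) :
    ∀ w ∈ X, ∑ k ∈ Icc 1 K, ⟪g k, y k⟫
      ≤ ⟪∑ k ∈ Icc 1 K, g k, w⟫ + ψ w / η K + ∑ k ∈ Icc 1 K, η k / (2 * m) * ‖g k‖ ^ 2 := by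
  induction K, hK using Nat.le_induction with
  | base =>
    intro w hw
    have hstep := (hy 1 (by simp)).add_inner_le hψ hm (hη_pos 1 (by simp)) hw (g 1)
    have hpotential : 0 ≤ ψ (y 1) / η 1 :=
      div_nonneg (hψ_nonneg _ (hy 1 (by simp)).1) (hη_pos 1 (by simp)).le
    simp only [Ico_self, sum_empty, inner_zero_left, zero_add] at hstep
    simp only [Icc_self, sum_singleton]
    linarith
  | succ K hK ih =>
    intro w hw
    have hlast : K + 1 ∈ Icc 1 (K + 1) := by simp
    have hstep := (hy _ hlast).add_inner_le hψ hm (hη_pos _ hlast) hw (g (K + 1))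
    have hprev := ih (fun k hk => hη_pos k (Icc_subset_Icc_right K.le_succ hk))
      (fun k hk => hη_anti k (Ico_subset_Ico_right K.le_succ hk))
      (fun k hk => hy k (Icc_subset_Icc_right K.le_succ hk)) _ (hy _ hlast).1
    have hpotential : ψ (y (K + 1)) / η K ≤ ψ (y (K + 1)) / η (K + 1) :=
      div_le_div_of_nonneg_left (hψ_nonneg _ (hy _ hlast).1) (hη_pos _ hlast)
        (hη_anti K (by simp [hK]))
    rw [Ico_add_one_right_eq_Icc] at hstep
    simp only [sum_Icc_succ_top (Nat.le_add_left 1 K)]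
    linarith

theorem dualAveraging_regret_le (hψ : StrongConvexOn X m ψ) (hm : 0 < m)
    (hψ_nonneg : ∀ u ∈ X, 0 ≤ ψ u) (hK : 1 ≤ K) (hη_pos : ∀ k ∈ Icc 1 K, 0 < η k)
    (hη_anti : ∀ k ∈ Ico 1 K, η (k + 1) ≤ η k)
    (hy : ∀ k ∈ Icc 1 K, IsMirrorProjection X ψ (η k) (∑ l ∈ Ico 1 k, g l) (y k))
    {w : E} (hw : w ∈ X) :
    ∑ k ∈ Icc 1 K, ⟪g k, y k - w⟫
      ≤ ψ w / η K + ∑ k ∈ Icc 1 K, η k / (2 * m) * ‖g k‖ ^ 2 := by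
  have hpotential := dualAveraging_sum_inner_le hψ hm hψ_nonneg hK hη_pos hη_anti hy w hw
  simp only [inner_sub_right, sum_sub_distrib, sum_inner] at hpotential ⊢
  linarith

end DualAveraging

section NodeAverage

variable {ι V : Type*} [Fintype ι] [AddCommGroup V] [Module ℝ V]

/-- The average `(1/n) ∑ᵢ vᵢ` over the `n` nodes of the network, used both for vectors and for
functions. -/
noncomputable def nodeAverage (v : ι → V) : V := (Fintype.card ι : ℝ)⁻¹ • ∑ i, v i

theorem nodeAverage_apply {α : Type*} (v : ι → α → V) (a : α) :
    nodeAverage v a = nodeAverage fun i => v i a := by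
  simp only [nodeAverage, Pi.smul_apply, Finset.sum_apply]

theorem nodeAverage_add (u v : ι → V) :
    nodeAverage (fun i => u i + v i) = nodeAverage u + nodeAverage v := by
  simp only [nodeAverage, sum_add_distrib, smul_add]

theorem nodeAverage_sub (u v : ι → V) :
    nodeAverage (fun i => u i - v i) = nodeAverage u - nodeAverage v := by
  simp only [nodeAverage, sum_sub_distrib, smul_sub]

theorem nodeAverage_const_mul (c : ℝ) (u : ι → ℝ) :
    nodeAverage (fun i => c * u i) = c * nodeAverage u := by
  simp only [nodeAverage, smul_eq_mul, ← mul_sum, mul_left_comm]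

theorem nodeAverage_const [Nonempty ι] (c : V) : nodeAverage (fun _ : ι => c) = c := by
  have hcard : (Fintype.card ι : ℝ) ≠ 0 := Nat.cast_ne_zero.2 Fintype.card_ne_zero
  rw [nodeAverage, sum_const, card_univ, ← Nat.cast_smul_eq_nsmul ℝ, inv_smul_smul₀ hcard]

theorem nodeAverage_mono {u v : ι → ℝ} (h : ∀ i, u i ≤ v i) : nodeAverage u ≤ nodeAverage v :=
  smul_le_smul_of_nonneg_left (sum_le_sum fun i _ => h i) (by positivity)

theorem abs_nodeAverage_le (u : ι → ℝ) : |nodeAverage u| ≤ nodeAverage fun i => |u i| := by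
  rw [nodeAverage, abs_smul, abs_of_nonneg (by positivity)]
  exact smul_le_smul_of_nonneg_left (abs_sum_le_sum_abs _ _) (by positivity)

theorem inner_nodeAverage_left {E : Type*} [NormedAddCommGroup E] [InnerProductSpace ℝ E]
    (v : ι → E) (w : E) : ⟪nodeAverage v, w⟫ = nodeAverage fun i => ⟪v i, w⟫ := by
  simp only [nodeAverage, real_inner_smul_left, sum_inner, smul_eq_mul]

theorem convexOn_nodeAverage {X : Set V} (hX : Convex ℝ X) {f : ι → V → ℝ}
    (hf : ∀ i, ConvexOn ℝ X (f i)) : ConvexOn ℝ X (nodeAverage f) :=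
  (sum_induction f (ConvexOn ℝ X) (fun _ _ => ConvexOn.add) (convexOn_const 0 hX)
    fun i _ => hf i).smul (by positivity)

theorem norm_nodeAverage_sq_le {E : Type*} [SeminormedAddCommGroup E] [NormedSpace ℝ E]
    [Nonempty ι] (v : ι → E) : ‖nodeAverage v‖ ^ 2 ≤ nodeAverage fun i => ‖v i‖ ^ 2 := by
  have hconv : ConvexOn ℝ Set.univ fun u : E => ‖u‖ ^ 2 :=
    convexOn_univ_norm.pow (fun _ _ => norm_nonneg _) 2
  have hjensen := hconv.map_sum_le (t := univ) (w := fun _ : ι => (Fintype.card ι : ℝ)⁻¹)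
    (p := v) (fun _ _ => by positivity) (by simp) (fun _ _ => Set.mem_univ _)
  simpa only [nodeAverage, smul_sum] using hjensen

theorem abs_nodeAverage_sub_le [Nonempty ι] {E : Type*} [SeminormedAddCommGroup E] {X : Set E}
    {L : ℝ} {f : ι → E → ℝ} (hf : ∀ i, ∀ u ∈ X, ∀ v ∈ X, |f i u - f i v| ≤ L * ‖u - v‖) :
    ∀ u ∈ X, ∀ v ∈ X, |nodeAverage f u - nodeAverage f v| ≤ L * ‖u - v‖ := by
  intro u hu v hv
  rw [nodeAverage_apply, nodeAverage_apply, ← nodeAverage_sub]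
  calc |nodeAverage fun i => f i u - f i v| ≤ nodeAverage fun i => |f i u - f i v| :=
        abs_nodeAverage_le _
    _ ≤ nodeAverage fun _ : ι => L * ‖u - v‖ := nodeAverage_mono fun i => hf i u hu v hv
    _ = L * ‖u - v‖ := nodeAverage_const _

end NodeAverage

section LipschitzDependence

variable {Ω E E' : Type*} {m0 : MeasurableSpace Ω} [NormedAddCommGroup E] [NormedAddCommGroup E']
  {C : ℝ} {u : Ω → E'} {v : Ω → E}

theorem stronglyMeasurable_of_norm_sub_le (hv : StronglyMeasurable v)
    (h : ∀ a b, ‖u a - u b‖ ≤ C * ‖v a - v b‖) : StronglyMeasurable u := by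
  have hfactor : StronglyMeasurable (Set.rangeFactorization v) :=
    (Embedding.comp_stronglyMeasurable_iff Topology.IsEmbedding.subtypeVal).1 hv
  have hlip : LipschitzWith C.toNNReal (u ∘ Set.rangeSplitting v) :=
    LipschitzWith.of_dist_le' fun a b => by
      simpa only [Function.comp_apply, dist_eq_norm, Set.apply_rangeSplitting, Subtype.dist_eq]
        using h (Set.rangeSplitting v a) (Set.rangeSplitting v b)
  have hcomp : (u ∘ Set.rangeSplitting v) ∘ Set.rangeFactorization v = u := by
    ext1 a
    have hdist := h (Set.rangeSplitting v (Set.rangeFactorization v a)) a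
    rw [Set.apply_rangeSplitting v, Set.rangeFactorization_coe, sub_self, norm_zero,
      mul_zero] at hdist
    exact sub_eq_zero.1 (norm_le_zero_iff.1 hdist)
  exact hcomp ▸ hlip.continuous.comp_stronglyMeasurable hfactor

theorem memLp_of_norm_sub_le {μ : Measure Ω} [IsFiniteMeasure μ] {p : ENNReal} (hv : MemLp v p μ)
    (hu : AEStronglyMeasurable u μ) (h : ∀ a b, ‖u a - u b‖ ≤ C * ‖v a - v b‖) : MemLp u p μ := by
  rcases isEmpty_or_nonempty Ω with hΩ | ⟨⟨a⟩⟩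
  · exact MemLp.of_bound hu 0 (ae_of_all _ fun b => hΩ.elim b)
  · have hincrement : MemLp (fun b => u b - u a) p μ :=
      MemLp.of_le_mul (hv.sub (memLp_const (v a))) (hu.sub aestronglyMeasurable_const)
        (ae_of_all _ fun b => h b a)
    simpa only [Pi.add_def, sub_add_cancel] using hincrement.add (memLp_const (u a))

theorem integrable_comp_of_abs_sub_le {μ : Measure Ω} [IsFiniteMeasure μ] {X : Set E} {f : E → ℝ}
    (hf : ∀ a ∈ X, ∀ b ∈ X, |f a - f b| ≤ C * ‖a - b‖) (hv : StronglyMeasurable v)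
    (hvμ : Integrable v μ) (hvX : ∀ ω, v ω ∈ X) : Integrable (fun ω => f (v ω)) μ := by
  have hlip : ∀ a b, ‖f (v a) - f (v b)‖ ≤ C * ‖v a - v b‖ := fun a b => hf _ (hvX a) _ (hvX b)
  exact memLp_one_iff_integrable.1 <| memLp_of_norm_sub_le (memLp_one_iff_integrable.2 hvμ)
    (stronglyMeasurable_of_norm_sub_le hv hlip).aestronglyMeasurable hlip

theorem integral_comp_sub_le {μ : Measure Ω} [IsFiniteMeasure μ] {X : Set E} {f : E → ℝ}
    (hf : ∀ a ∈ X, ∀ b ∈ X, |f a - f b| ≤ C * ‖a - b‖) {u : Ω → E} (hu : StronglyMeasurable u)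
    (huμ : Integrable u μ) (huX : ∀ ω, u ω ∈ X) (hv : StronglyMeasurable v) (hvμ : Integrable v μ)
    (hvX : ∀ ω, v ω ∈ X) : ∫ ω, f (u ω) ∂μ - ∫ ω, f (v ω) ∂μ ≤ C * ∫ ω, ‖u ω - v ω‖ ∂μ := by
  have hfu := integrable_comp_of_abs_sub_le hf hu huμ huX
  have hfv := integrable_comp_of_abs_sub_le hf hv hvμ hvX
  rw [← integral_sub hfu hfv, ← integral_const_mul]
  exact integral_mono (hfu.sub hfv) ((huμ.sub hvμ).norm.const_mul C)
    fun ω => (le_abs_self _).trans (hf _ (huX ω) _ (hvX ω))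

end LipschitzDependence

theorem integral_map_sum_le {Ω E κ : Type*} {m0 : MeasurableSpace Ω} {μ : Measure Ω}
    [AddCommGroup E] [Module ℝ E] {X : Set E} {φ : E → ℝ} (hφ : ConvexOn ℝ X φ) {t : Finset κ}
    {c : κ → ℝ} (hc_nonneg : ∀ k ∈ t, 0 ≤ c k) (hc_sum : ∑ k ∈ t, c k = 1) {x : κ → Ω → E}
    (hxX : ∀ k ∈ t, ∀ ω, x k ω ∈ X) (hx : ∀ k ∈ t, Integrable (fun ω => φ (x k ω)) μ)
    (hsum : Integrable (fun ω => φ (∑ k ∈ t, c k • x k ω)) μ) :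
    ∫ ω, φ (∑ k ∈ t, c k • x k ω) ∂μ ≤ ∑ k ∈ t, c k * ∫ ω, φ (x k ω) ∂μ := by
  calc ∫ ω, φ (∑ k ∈ t, c k • x k ω) ∂μ ≤ ∫ ω, ∑ k ∈ t, c k * φ (x k ω) ∂μ :=
        integral_mono hsum (integrable_finsetSum _ fun k hk => (hx k hk).const_mul _)
          fun ω => hφ.map_sum_le hc_nonneg hc_sum fun k hk => hxX k hk ω
    _ = ∑ k ∈ t, c k * ∫ ω, φ (x k ω) ∂μ := by
        rw [integral_finsetSum _ fun k hk => (hx k hk).const_mul _]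
        simp only [integral_const_mul]

theorem integrable_inner_of_memLp_two {Ω E : Type*} {_ : MeasurableSpace Ω} {μ : Measure Ω}
    [NormedAddCommGroup E] [InnerProductSpace ℝ E] {u v : Ω → E} (hu : MemLp u 2 μ)
    (hv : MemLp v 2 μ) : Integrable (fun ω => ⟪u ω, v ω⟫) μ :=
  memLp_one_iff_integrable.1 ((innerSL ℝ).memLp_of_bilin 1 hu hv)

section CondExp

variable {Ω E : Type*} {m m0 : MeasurableSpace Ω} {μ : Measure Ω}
  [NormedAddCommGroup E] [CompleteSpace E] {u v : Ω → E}

theorem integral_inner_condExp [InnerProductSpace ℝ E] [IsFiniteMeasure μ] (hm : m ≤ m0)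
    (hu : MemLp u 2 μ) (hv : MemLp v 2 μ) (hv_meas : StronglyMeasurable[m] v) :
    ∫ ω, ⟪(μ[u | m]) ω, v ω⟫ ∂μ = ∫ ω, ⟪u ω, v ω⟫ ∂μ := by
  have hpull : μ[fun ω => ⟪u ω, v ω⟫ | m] =ᵐ[μ] fun ω => ⟪(μ[u | m]) ω, v ω⟫ :=
    condExp_bilin_of_stronglyMeasurable_right (innerSL ℝ) hv_meas
      (integrable_inner_of_memLp_two hu hv) (hu.integrable one_le_two)
  rw [← integral_congr_ae hpull, integral_condExp hm]

theorem norm_condExp_le_of_condExp_norm_sq_le [NormedSpace ℝ E] (hu : MemLp u 2 μ) {ξ : ℝ}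
    (hξ : 0 ≤ ξ) (h : ∀ᵐ ω ∂μ, (μ[fun ω' => ‖u ω'‖ ^ 2 | m]) ω ≤ ξ ^ 2) :
    ∀ᵐ ω ∂μ, ‖(μ[u | m]) ω‖ ≤ ξ := by
  have hjensen := Integrable.norm_condExp_rpow_le (m := m) (μ := μ) (f := u) (p := 2) one_le_two
    (by simpa only [Real.rpow_ofNat] using hu.integrable_norm_pow two_ne_zero)
  simp only [Real.rpow_ofNat] at hjensen
  filter_upwards [h, hjensen] with ω hsecond hnorm
  exact (sq_le_sq₀ (norm_nonneg _) hξ).1 (hnorm.trans hsecond)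

end CondExp

theorem integral_le_of_condExp_le {Ω : Type*} {m m0 : MeasurableSpace Ω} {μ : Measure Ω}
    [IsProbabilityMeasure μ] (hm : m ≤ m0) {u : Ω → ℝ} {c : ℝ}
    (h : ∀ᵐ ω ∂μ, (μ[u | m]) ω ≤ c) : ∫ ω, u ω ∂μ ≤ c := by
  calc ∫ ω, u ω ∂μ = ∫ ω, (μ[u | m]) ω ∂μ := (integral_condExp hm).symm
    _ ≤ ∫ _, c ∂μ := integral_mono_ae integrable_condExp (integrable_const c) h
    _ = c := by rw [integral_const, probReal_univ, one_smul]

section StochasticSubgradient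

variable {Ω E : Type*} {m m0 : MeasurableSpace Ω} {μ : Measure Ω}
  [NormedAddCommGroup E] [InnerProductSpace ℝ E] {X : Set E} {L ξ : ℝ}

/-- A random vector `g` is a stochastic subgradient over `X` of `f` at the random point `x`, given
the information `m`: its conditional mean is a subgradient of `f` at `x` relative to `X`, and its
conditional second moment is at most `ξ ^ 2`. Square integrability is required because Mathlib's
conditional expectation of a non-integrable function is `0`. -/
structure IsStochasticSubgradient [CompleteSpace E] (μ : Measure Ω) (m : MeasurableSpace Ω)
    (X : Set E) (f : E → ℝ) (ξ : ℝ) (x g : Ω → E) : Prop where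
  memLp : MemLp g 2 μ
  subgradient : ∀ᵐ ω ∂μ, ∀ w ∈ X, f (x ω) + ⟪(μ[g | m]) ω, w - x ω⟫ ≤ f w
  condExp_norm_sq_le : ∀ᵐ ω ∂μ, (μ[fun ω' => ‖g ω'‖ ^ 2 | m]) ω ≤ ξ ^ 2

theorem sub_le_of_subgradient {f : E → ℝ} (hf : ∀ a ∈ X, ∀ b ∈ X, |f a - f b| ≤ L * ‖a - b‖)
    {x y v w : E} (hx : x ∈ X) (hy : y ∈ X) (hv : ‖v‖ ≤ ξ) (hsub : f x + ⟪v, w - x⟫ ≤ f w) :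
    f y - f w ≤ (L + ξ) * ‖y - x‖ + ⟪v, y - w⟫ := by
  have hlip : f y - f x ≤ L * ‖y - x‖ := (le_abs_self _).trans (hf y hy x hx)
  have hcauchy : ⟪v, x - y⟫ ≤ ξ * ‖y - x‖ := by
    rw [norm_sub_rev y x]
    exact (real_inner_le_norm _ _).trans (by gcongr)
  simp only [inner_sub_right] at hsub hcauchy ⊢
  linarith

namespace IsStochasticSubgradient

variable [CompleteSpace E] [IsProbabilityMeasure μ] {x g : Ω → E}

theorem integral_norm_sq_le {f : E → ℝ} (hm : m ≤ m0)
    (hg : IsStochasticSubgradient μ m X f ξ x g) : ∫ ω, ‖g ω‖ ^ 2 ∂μ ≤ ξ ^ 2 :=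
  integral_le_of_condExp_le hm hg.condExp_norm_sq_le

theorem integral_sub_le {f : E → ℝ} (hm : m ≤ m0) (hg : IsStochasticSubgradient μ m X f ξ x g)
    (hξ : 0 ≤ ξ) (hf : ∀ a ∈ X, ∀ b ∈ X, |f a - f b| ≤ L * ‖a - b‖) (hx : Integrable x μ)
    (hxX : ∀ ω, x ω ∈ X) {y : Ω → E} (hy : StronglyMeasurable[m] y) (hy_memLp : MemLp y 2 μ)
    (hyX : ∀ ω, y ω ∈ X) {w : E} (hw : w ∈ X) :
    ∫ ω, f (y ω) ∂μ - f w ≤ (L + ξ) * ∫ ω, ‖y ω - x ω‖ ∂μ + ∫ ω, ⟪g ω, y ω - w⟫ ∂μ := by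
  have hy_int : Integrable y μ := hy_memLp.integrable one_le_two
  have hyw : MemLp (fun ω => y ω - w) 2 μ := hy_memLp.sub (memLp_const w)
  have hfy := integrable_comp_of_abs_sub_le hf (hy.mono hm) hy_int hyX
  have hgap : Integrable (fun ω => (L + ξ) * ‖y ω - x ω‖) μ :=
    (hy_int.sub hx).norm.const_mul (L + ξ)
  have hinner := integrable_inner_of_memLp_two (hg.memLp.condExp (m := m) one_le_two) hyw
  have hpointwise : ∀ᵐ ω ∂μ, f (y ω) - f w ≤ (L + ξ) * ‖y ω - x ω‖ + ⟪(μ[g | m]) ω, y ω - w⟫ := by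
    filter_upwards [hg.subgradient,
      norm_condExp_le_of_condExp_norm_sq_le hg.memLp hξ hg.condExp_norm_sq_le] with ω hsub hnorm
    exact sub_le_of_subgradient hf (hxX ω) (hyX ω) hnorm (hsub w hw)
  calc ∫ ω, f (y ω) ∂μ - f w = ∫ ω, (f (y ω) - f w) ∂μ := by
        rw [integral_sub hfy (integrable_const _), integral_const, probReal_univ, one_smul]
    _ ≤ ∫ ω, ((L + ξ) * ‖y ω - x ω‖ + ⟪(μ[g | m]) ω, y ω - w⟫) ∂μ :=
        integral_mono_ae (hfy.sub (integrable_const _)) (hgap.add hinner) hpointwise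
    _ = (L + ξ) * ∫ ω, ‖y ω - x ω‖ ∂μ + ∫ ω, ⟪g ω, y ω - w⟫ ∂μ := by
        rw [integral_add hgap hinner, integral_const_mul,
          integral_inner_condExp hm hg.memLp hyw (hy.sub stronglyMeasurable_const)]

end IsStochasticSubgradient

end StochasticSubgradient

section NodeAverageIntegral

variable {Ω ι V : Type*} [Fintype ι] {m0 : MeasurableSpace Ω} [NormedAddCommGroup V]
  [NormedSpace ℝ V] {u : ι → Ω → V}

theorem stronglyMeasurable_nodeAverage (hu : ∀ i, StronglyMeasurable (u i)) :
    StronglyMeasurable fun ω => nodeAverage fun i => u i ω :=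
  (Finset.stronglyMeasurable_fun_sum _ fun i _ => hu i).const_smul _

variable {μ : Measure Ω}

theorem memLp_nodeAverage {p : ENNReal} (hu : ∀ i, MemLp (u i) p μ) :
    MemLp (fun ω => nodeAverage fun i => u i ω) p μ :=
  (memLp_finsetSum _ fun i _ => hu i).const_smul _

theorem integral_nodeAverage (hu : ∀ i, Integrable (u i) μ) :
    ∫ ω, nodeAverage (fun i => u i ω) ∂μ = nodeAverage fun i => ∫ ω, u i ω ∂μ := by
  simp only [nodeAverage, integral_smul, integral_finsetSum _ fun i _ => hu i]

end NodeAverageIntegral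

section ConsensusRecursion

variable {ι V : Type*} [Fintype ι] [AddCommGroup V] [Module ℝ V] {K : ℕ}
  {W : ℕ → Matrix ι ι ℝ} {z g : ι → ℕ → V}

/-- The dual recursion of `K` rounds of distributed mirror descent: each node starts at `0`, mixes
the states of the nodes with the weights `W k`, and adds its own increment. Rounds are numbered from
`1`. -/
structure IsConsensusRecursion (K : ℕ) (W : ℕ → Matrix ι ι ℝ) (z g : ι → ℕ → V) : Prop where
  init : ∀ i, z i 1 = 0
  step : ∀ i, ∀ k ∈ Icc 1 K, z i (k + 1) = ∑ j, W k i j • z j k + g i k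

theorem nodeAverage_sum_smul {A : Matrix ι ι ℝ} (hA : ∀ j, ∑ i, A i j = 1) (v : ι → V) :
    nodeAverage (fun i => ∑ j, A i j • v j) = nodeAverage v := by
  rw [nodeAverage, sum_comm]
  simp only [← sum_smul, hA, one_smul, nodeAverage]

namespace IsConsensusRecursion

theorem nodeAverage_eq_sum (h : IsConsensusRecursion K W z g)
    (hW : ∀ k ∈ Icc 1 K, ∀ j, ∑ i, W k i j = 1) {k : ℕ} (hk : 1 ≤ k) (hkK : k ≤ K) :
    nodeAverage (fun i => z i k) = ∑ l ∈ Ico 1 k, nodeAverage fun i => g i l := by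
  induction k, hk using Nat.le_induction with
  | base => simp only [h.init, nodeAverage, sum_const_zero, smul_zero, Ico_self, sum_empty]
  | succ k hk ih =>
    have hmem : k ∈ Icc 1 K := mem_Icc.2 ⟨hk, k.le_succ.trans hkK⟩
    simp only [h.step _ k hmem]
    rw [nodeAverage_add, nodeAverage_sum_smul (hW k hmem), ih (k.le_succ.trans hkK),
      sum_Ico_succ_top hk]

variable {Ω E : Type*} {m0 : MeasurableSpace Ω} [NormedAddCommGroup E] [NormedSpace ℝ E]
  {z g : ι → ℕ → Ω → E}

theorem stronglyMeasurable {F : Filtration ℕ m0} (h : IsConsensusRecursion K W z g)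
    (hg : ∀ i, ∀ k ∈ Icc 1 K, StronglyMeasurable[F k] (g i k)) {k : ℕ} (hk : 1 ≤ k)
    (hkK : k ≤ K) (i : ι) : StronglyMeasurable[F (k - 1)] (z i k) := by
  induction k, hk using Nat.le_induction generalizing i with
  | base => exact h.init i ▸ stronglyMeasurable_zero
  | succ k hk ih =>
    have hmem : k ∈ Icc 1 K := mem_Icc.2 ⟨hk, k.le_succ.trans hkK⟩
    have hprev (j : ι) : StronglyMeasurable[F k] (z j k) :=
      (ih (k.le_succ.trans hkK) j).mono (F.mono k.pred_le)
    rw [h.step i k hmem, Nat.add_sub_cancel]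
    exact (Finset.stronglyMeasurable_sum _ fun j _ => (hprev j).const_smul _).add (hg i k hmem)

theorem memLp {μ : Measure Ω} {p : ENNReal} (h : IsConsensusRecursion K W z g)
    (hg : ∀ i, ∀ k ∈ Icc 1 K, MemLp (g i k) p μ) {k : ℕ} (hk : 1 ≤ k) (hkK : k ≤ K) (i : ι) :
    MemLp (z i k) p μ := by
  induction k, hk using Nat.le_induction generalizing i with
  | base => exact h.init i ▸ MemLp.zero
  | succ k hk ih =>
    have hmem : k ∈ Icc 1 K := mem_Icc.2 ⟨hk, k.le_succ.trans hkK⟩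
    rw [h.step i k hmem]
    exact (memLp_finsetSum' _ fun j _ => (ih (k.le_succ.trans hkK) j).const_smul _).add
      (hg i k hmem)

end IsConsensusRecursion

end ConsensusRecursion

section RandomMirrorProjection

variable {Ω E : Type*} {m0 : MeasurableSpace Ω} [NormedAddCommGroup E] [InnerProductSpace ℝ E]
  {X : Set E} {ψ : E → ℝ} {m η : ℝ} {z z' p q : Ω → E}

namespace IsMirrorProjection

theorem stronglyMeasurable (hψ : StrongConvexOn X m ψ) (hm : 0 < m) (hη : 0 < η)
    (hp : ∀ ω, IsMirrorProjection X ψ η (z ω) (p ω)) (hz : StronglyMeasurable z) :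
    StronglyMeasurable p :=
  stronglyMeasurable_of_norm_sub_le hz fun a b => (hp a).norm_sub_le hψ hm hη (hp b)

variable {μ : Measure Ω}

theorem memLp [IsFiniteMeasure μ] {r : ENNReal} (hψ : StrongConvexOn X m ψ) (hm : 0 < m)
    (hη : 0 < η) (hp : ∀ ω, IsMirrorProjection X ψ η (z ω) (p ω)) (hz : StronglyMeasurable z)
    (hz_memLp : MemLp z r μ) : MemLp p r μ :=
  memLp_of_norm_sub_le hz_memLp
    (IsMirrorProjection.stronglyMeasurable hψ hm hη hp hz).aestronglyMeasurable
    fun a b => (hp a).norm_sub_le hψ hm hη (hp b)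

theorem integral_norm_sub_le (hψ : StrongConvexOn X m ψ) (hm : 0 < m) (hη : 0 < η)
    (hp : ∀ ω, IsMirrorProjection X ψ η (z ω) (p ω))
    (hq : ∀ ω, IsMirrorProjection X ψ η (z' ω) (q ω)) (hzz' : Integrable (fun ω => z ω - z' ω) μ) :
    ∫ ω, ‖p ω - q ω‖ ∂μ ≤ η / m * ∫ ω, ‖z ω - z' ω‖ ∂μ := by
  rw [← integral_const_mul]
  exact integral_mono_of_nonneg (ae_of_all _ fun ω => norm_nonneg _) (hzz'.norm.const_mul _)
    (ae_of_all _ fun ω => (hp ω).norm_sub_le hψ hm hη (hq ω))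

end IsMirrorProjection

theorem dualAveraging_integral_regret_le {μ : Measure Ω} [IsProbabilityMeasure μ] {K : ℕ}
    {η : ℕ → ℝ} {g y : ℕ → Ω → E} {σ : ℝ} (hψ : StrongConvexOn X m ψ) (hm : 0 < m)
    (hψ_nonneg : ∀ u ∈ X, 0 ≤ ψ u) (hK : 1 ≤ K) (hη_pos : ∀ k ∈ Icc 1 K, 0 < η k)
    (hη_anti : ∀ k ∈ Ico 1 K, η (k + 1) ≤ η k)
    (hy : ∀ k ∈ Icc 1 K, ∀ ω, IsMirrorProjection X ψ (η k) (∑ l ∈ Ico 1 k, g l ω) (y k ω))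
    (hy_memLp : ∀ k ∈ Icc 1 K, MemLp (y k) 2 μ) (hg_memLp : ∀ k ∈ Icc 1 K, MemLp (g k) 2 μ)
    (hg_sq : ∀ k ∈ Icc 1 K, ∫ ω, ‖g k ω‖ ^ 2 ∂μ ≤ σ) {w : E} (hw : w ∈ X) :
    ∑ k ∈ Icc 1 K, ∫ ω, ⟪g k ω, y k ω - w⟫ ∂μ
      ≤ ψ w / η K + σ / (2 * m) * ∑ k ∈ Icc 1 K, η k := by
  have hinner (k : ℕ) (hk : k ∈ Icc 1 K) : Integrable (fun ω => ⟪g k ω, y k ω - w⟫) μ :=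
    integrable_inner_of_memLp_two (hg_memLp k hk) ((hy_memLp k hk).sub (memLp_const w))
  have hsq (k : ℕ) (hk : k ∈ Icc 1 K) : Integrable (fun ω => η k / (2 * m) * ‖g k ω‖ ^ 2) μ :=
    ((hg_memLp k hk).integrable_norm_pow two_ne_zero).const_mul _
  calc ∑ k ∈ Icc 1 K, ∫ ω, ⟪g k ω, y k ω - w⟫ ∂μ
      = ∫ ω, ∑ k ∈ Icc 1 K, ⟪g k ω, y k ω - w⟫ ∂μ := (integral_finsetSum _ hinner).symm
    _ ≤ ∫ ω, (ψ w / η K + ∑ k ∈ Icc 1 K, η k / (2 * m) * ‖g k ω‖ ^ 2) ∂μ :=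
        integral_mono (integrable_finsetSum _ hinner)
          ((integrable_const _).add (integrable_finsetSum _ hsq)) fun ω =>
          dualAveraging_regret_le hψ hm hψ_nonneg hK hη_pos hη_anti (fun k hk => hy k hk ω) hw
    _ = ψ w / η K + ∑ k ∈ Icc 1 K, η k / (2 * m) * ∫ ω, ‖g k ω‖ ^ 2 ∂μ := by
        rw [integral_add (integrable_const _) (integrable_finsetSum _ hsq),
          integral_finsetSum _ hsq, integral_const, probReal_univ, one_smul]
        simp only [integral_const_mul]
    _ ≤ ψ w / η K + ∑ k ∈ Icc 1 K, η k / (2 * m) * σ := by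
        gcongr with k hk
        · exact div_nonneg (hη_pos k hk).le (by positivity)
        · exact hg_sq k hk
    _ = ψ w / η K + σ / (2 * m) * ∑ k ∈ Icc 1 K, η k := by
        rw [← sum_mul, ← sum_div, div_mul_eq_mul_div, div_mul_eq_mul_div, mul_comm σ]

end RandomMirrorProjection

section DistributedMirrorDescent

variable {Ω ι E : Type*} [Fintype ι] {m0 : MeasurableSpace Ω} {μ : Measure Ω}
  [NormedAddCommGroup E] [InnerProductSpace ℝ E] [CompleteSpace E]
  {X : Set E} {f : ι → E → ℝ} {L ξ : ℝ}

theorem IsStochasticSubgradient.integral_nodeAverage_sub_le [IsProbabilityMeasure μ] [Nonempty ι]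
    {m : MeasurableSpace Ω} {x g : ι → Ω → E} (hm : m ≤ m0)
    (hg : ∀ j, IsStochasticSubgradient μ m X (f j) ξ (x j) (g j)) (hξ : 0 ≤ ξ)
    (hf : ∀ j, ∀ a ∈ X, ∀ b ∈ X, |f j a - f j b| ≤ L * ‖a - b‖)
    (hx : ∀ j, Integrable (x j) μ) (hxX : ∀ j ω, x j ω ∈ X) {y : Ω → E}
    (hy : StronglyMeasurable[m] y) (hy_memLp : MemLp y 2 μ) (hyX : ∀ ω, y ω ∈ X)
    {w : E} (hw : w ∈ X) :
    ∫ ω, nodeAverage f (y ω) ∂μ - nodeAverage f w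
      ≤ (L + ξ) * nodeAverage (fun j => ∫ ω, ‖y ω - x j ω‖ ∂μ)
        + ∫ ω, ⟪nodeAverage fun j => g j ω, y ω - w⟫ ∂μ := by
  have hfy (j : ι) : Integrable (fun ω => f j (y ω)) μ :=
    integrable_comp_of_abs_sub_le (hf j) (hy.mono hm) (hy_memLp.integrable one_le_two) hyX
  have hinner (j : ι) : Integrable (fun ω => ⟪g j ω, y ω - w⟫) μ :=
    integrable_inner_of_memLp_two (hg j).memLp (hy_memLp.sub (memLp_const w))
  simp only [nodeAverage_apply, inner_nodeAverage_left]
  rw [integral_nodeAverage hfy, integral_nodeAverage hinner, ← nodeAverage_sub,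
    ← nodeAverage_const_mul, ← nodeAverage_add]
  exact nodeAverage_mono fun j =>
    (hg j).integral_sub_le hm hξ (hf j) (hx j) (hxX j) hy hy_memLp hyX hw

/-- A run of `K` rounds of distributed mirror descent (DLMD-DiffEx) with step sizes `η` and
consensus matrices `W`: the dual states `z` follow the consensus recursion driven by the adapted
stochastic subgradients `g`, taken at the projections `x` of the dual states, and `y` is the virtual
sequence of projections of the averaged dual states. The increment `g j k` is revealed at time `k`,
so it is conditioned on `F (k - 1)`. -/
structure IsDistributedMirrorDescent (μ : Measure Ω) (F : Filtration ℕ m0) (K : ℕ) (X : Set E)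
    (ψ : E → ℝ) (η : ℕ → ℝ) (W : ℕ → Matrix ι ι ℝ) (f : ι → E → ℝ) (ξ : ℝ)
    (z g x : ι → ℕ → Ω → E) (y : ℕ → Ω → E) : Prop where
  recursion : IsConsensusRecursion K W z g
  adapted : ∀ j, ∀ k ∈ Icc 1 K, StronglyMeasurable[F k] (g j k)
  subgradient : ∀ j, ∀ k ∈ Icc 1 K,
    IsStochasticSubgradient μ (F (k - 1)) X (f j) ξ (x j k) (g j k)
  projection : ∀ j, ∀ k ∈ Icc 1 K, ∀ ω, IsMirrorProjection X ψ (η k) (z j k ω) (x j k ω)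
  projection_average : ∀ k ∈ Icc 1 K, ∀ ω,
    IsMirrorProjection X ψ (η k) (nodeAverage fun j => z j k ω) (y k ω)

namespace IsDistributedMirrorDescent

variable {F : Filtration ℕ m0} {K : ℕ} {ψ : E → ℝ} {m : ℝ} {η : ℕ → ℝ} {W : ℕ → Matrix ι ι ℝ}
  {z g x : ι → ℕ → Ω → E} {y : ℕ → Ω → E} {k : ℕ} {w : E}

theorem stronglyMeasurable_dual (h : IsDistributedMirrorDescent μ F K X ψ η W f ξ z g x y)
    (hk : k ∈ Icc 1 K) (j : ι) : StronglyMeasurable[F (k - 1)] (z j k) :=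
  h.recursion.stronglyMeasurable h.adapted (mem_Icc.1 hk).1 (mem_Icc.1 hk).2 j

theorem memLp_dual (h : IsDistributedMirrorDescent μ F K X ψ η W f ξ z g x y)
    (hk : k ∈ Icc 1 K) (j : ι) : MemLp (z j k) 2 μ :=
  h.recursion.memLp (fun i l hl => (h.subgradient i l hl).memLp) (mem_Icc.1 hk).1
    (mem_Icc.1 hk).2 j

theorem stronglyMeasurable_primal (h : IsDistributedMirrorDescent μ F K X ψ η W f ξ z g x y)
    (hψ : StrongConvexOn X m ψ) (hm : 0 < m) (hη_pos : ∀ k ∈ Icc 1 K, 0 < η k)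
    (hk : k ∈ Icc 1 K) (j : ι) : StronglyMeasurable (x j k) :=
  IsMirrorProjection.stronglyMeasurable hψ hm (hη_pos k hk) (h.projection j k hk)
    ((h.stronglyMeasurable_dual hk j).mono (F.le _))

theorem memLp_primal [IsFiniteMeasure μ]
    (h : IsDistributedMirrorDescent μ F K X ψ η W f ξ z g x y)
    (hψ : StrongConvexOn X m ψ) (hm : 0 < m) (hη_pos : ∀ k ∈ Icc 1 K, 0 < η k)
    (hk : k ∈ Icc 1 K) (j : ι) : MemLp (x j k) 2 μ :=
  IsMirrorProjection.memLp hψ hm (hη_pos k hk) (h.projection j k hk)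
    ((h.stronglyMeasurable_dual hk j).mono (F.le _)) (h.memLp_dual hk j)

theorem stronglyMeasurable_virtual (h : IsDistributedMirrorDescent μ F K X ψ η W f ξ z g x y)
    (hψ : StrongConvexOn X m ψ) (hm : 0 < m) (hη_pos : ∀ k ∈ Icc 1 K, 0 < η k)
    (hk : k ∈ Icc 1 K) : StronglyMeasurable[F (k - 1)] (y k) :=
  IsMirrorProjection.stronglyMeasurable hψ hm (hη_pos k hk) (h.projection_average k hk)
    (stronglyMeasurable_nodeAverage (h.stronglyMeasurable_dual hk))

theorem memLp_virtual [IsFiniteMeasure μ]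
    (h : IsDistributedMirrorDescent μ F K X ψ η W f ξ z g x y)
    (hψ : StrongConvexOn X m ψ) (hm : 0 < m) (hη_pos : ∀ k ∈ Icc 1 K, 0 < η k)
    (hk : k ∈ Icc 1 K) : MemLp (y k) 2 μ :=
  IsMirrorProjection.memLp hψ hm (hη_pos k hk) (h.projection_average k hk)
    ((stronglyMeasurable_nodeAverage (h.stronglyMeasurable_dual hk)).mono (F.le _))
    (memLp_nodeAverage (h.memLp_dual hk))

theorem integral_norm_virtual_sub_primal_le [IsFiniteMeasure μ]
    (h : IsDistributedMirrorDescent μ F K X ψ η W f ξ z g x y) (hψ : StrongConvexOn X m ψ)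
    (hm : 0 < m) (hη_pos : ∀ k ∈ Icc 1 K, 0 < η k) (hk : k ∈ Icc 1 K) (j : ι) :
    ∫ ω, ‖y k ω - x j k ω‖ ∂μ
      ≤ η k / m * ∫ ω, ‖(nodeAverage fun i => z i k ω) - z j k ω‖ ∂μ :=
  IsMirrorProjection.integral_norm_sub_le hψ hm (hη_pos k hk) (h.projection_average k hk)
    (h.projection j k hk)
    (((memLp_nodeAverage (h.memLp_dual hk)).sub (h.memLp_dual hk j)).integrable one_le_two)

theorem integral_sub_le_of_mem_Icc [IsProbabilityMeasure μ]
    (h : IsDistributedMirrorDescent μ F K X ψ η W f ξ z g x y)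
    (hψ : StrongConvexOn X m ψ) (hm : 0 < m) (hη_pos : ∀ k ∈ Icc 1 K, 0 < η k)
    (hL : 0 ≤ L) (hf : ∀ j, ∀ a ∈ X, ∀ b ∈ X, |f j a - f j b| ≤ L * ‖a - b‖) (hξ : 0 ≤ ξ)
    (hk : k ∈ Icc 1 K) (hw : w ∈ X) (i : ι) :
    ∫ ω, nodeAverage f (x i k ω) ∂μ - nodeAverage f w
      ≤ η k / m * (L * ∫ ω, ‖(nodeAverage fun l => z l k ω) - z i k ω‖ ∂μ
          + (L + ξ) * nodeAverage fun j => ∫ ω, ‖(nodeAverage fun l => z l k ω) - z j k ω‖ ∂μ)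
        + ∫ ω, ⟪nodeAverage fun j => g j k ω, y k ω - w⟫ ∂μ := by
  have : Nonempty ι := ⟨i⟩
  have hy := h.stronglyMeasurable_virtual hψ hm hη_pos hk
  have hy_memLp := h.memLp_virtual hψ hm hη_pos hk
  have hyX (ω : Ω) : y k ω ∈ X := (h.projection_average k hk ω).1
  have hx_int (j : ι) : Integrable (x j k) μ :=
    (h.memLp_primal hψ hm hη_pos hk j).integrable one_le_two
  have hxX (j : ι) (ω : Ω) : x j k ω ∈ X := (h.projection j k hk ω).1
  have hdist := h.integral_norm_virtual_sub_primal_le hψ hm hη_pos hk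
  have hnode : ∫ ω, nodeAverage f (x i k ω) ∂μ - ∫ ω, nodeAverage f (y k ω) ∂μ
      ≤ L * ∫ ω, ‖y k ω - x i k ω‖ ∂μ := by
    simpa only [norm_sub_rev] using integral_comp_sub_le (abs_nodeAverage_sub_le hf)
      (h.stronglyMeasurable_primal hψ hm hη_pos hk i) (hx_int i) (hxX i) (hy.mono (F.le _))
      (hy_memLp.integrable one_le_two) hyX
  have hvirtual := IsStochasticSubgradient.integral_nodeAverage_sub_le (F.le (k - 1))
    (fun j => h.subgradient j k hk) hξ hf hx_int hxX hy hy_memLp hyX hw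
  have hnode_dist := mul_le_mul_of_nonneg_left (hdist i) hL
  have hvirtual_dist := mul_le_mul_of_nonneg_left (nodeAverage_mono hdist) (add_nonneg hL hξ)
  rw [nodeAverage_const_mul] at hvirtual_dist
  linarith

theorem sum_integral_inner_le [IsProbabilityMeasure μ] [Nonempty ι]
    (h : IsDistributedMirrorDescent μ F K X ψ η W f ξ z g x y) (hψ : StrongConvexOn X m ψ)
    (hm : 0 < m) (hψ_nonneg : ∀ u ∈ X, 0 ≤ ψ u) (hK : 1 ≤ K)
    (hη_pos : ∀ k ∈ Icc 1 K, 0 < η k) (hη_anti : ∀ k ∈ Ico 1 K, η (k + 1) ≤ η k)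
    (hW : ∀ k ∈ Icc 1 K, ∀ j, ∑ i, W k i j = 1) (hw : w ∈ X) :
    ∑ k ∈ Icc 1 K, ∫ ω, ⟪nodeAverage fun j => g j k ω, y k ω - w⟫ ∂μ
      ≤ ψ w / η K + ξ ^ 2 / (2 * m) * ∑ k ∈ Icc 1 K, η k := by
  have hg_memLp (k : ℕ) (hk : k ∈ Icc 1 K) : MemLp (fun ω => nodeAverage fun j => g j k ω) 2 μ :=
    memLp_nodeAverage fun j => (h.subgradient j k hk).memLp
  refine dualAveraging_integral_regret_le hψ hm hψ_nonneg hK hη_pos hη_anti (fun k hk ω => ?_)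
    (fun k hk => h.memLp_virtual hψ hm hη_pos hk) hg_memLp (fun k hk => ?_) hw
  · have haverage := congrFun (h.recursion.nodeAverage_eq_sum hW (mem_Icc.1 hk).1
      (mem_Icc.1 hk).2) ω
    simp only [Finset.sum_apply, nodeAverage_apply] at haverage
    exact haverage ▸ h.projection_average k hk ω
  · have hsq (j : ι) : Integrable (fun ω => ‖g j k ω‖ ^ 2) μ :=
      (h.subgradient j k hk).memLp.integrable_norm_pow two_ne_zero
    calc ∫ ω, ‖nodeAverage fun j => g j k ω‖ ^ 2 ∂μ
        ≤ ∫ ω, nodeAverage (fun j => ‖g j k ω‖ ^ 2) ∂μ :=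
          integral_mono ((hg_memLp k hk).integrable_norm_pow two_ne_zero)
            (memLp_one_iff_integrable.1 <| memLp_nodeAverage fun j =>
              memLp_one_iff_integrable.2 (hsq j)) fun ω => norm_nodeAverage_sq_le _
      _ = nodeAverage fun j => ∫ ω, ‖g j k ω‖ ^ 2 ∂μ := integral_nodeAverage hsq
      _ ≤ nodeAverage fun _ : ι => ξ ^ 2 :=
          nodeAverage_mono fun j => (h.subgradient j k hk).integral_norm_sq_le (F.le _)
      _ = ξ ^ 2 := nodeAverage_const _

theorem integral_ergodic_average_le [IsFiniteMeasure μ] [Nonempty ι]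
    (h : IsDistributedMirrorDescent μ F K X ψ η W f ξ z g x y) (hψ : StrongConvexOn X m ψ)
    (hm : 0 < m) (hK : 1 ≤ K) (hη_pos : ∀ k ∈ Icc 1 K, 0 < η k)
    (hf_conv : ∀ j, ConvexOn ℝ X (f j))
    (hf : ∀ j, ∀ a ∈ X, ∀ b ∈ X, |f j a - f j b| ≤ L * ‖a - b‖) (i : ι) :
    ∫ ω, nodeAverage f ((K : ℝ)⁻¹ • ∑ k ∈ Icc 1 K, x i k ω) ∂μ
      ≤ (K : ℝ)⁻¹ * ∑ k ∈ Icc 1 K, ∫ ω, nodeAverage f (x i k ω) ∂μ := by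
  have hweight : ∑ _ ∈ Icc 1 K, (K : ℝ)⁻¹ = 1 := by
    rw [sum_const, Nat.card_Icc, Nat.add_sub_cancel, nsmul_eq_mul,
      mul_inv_cancel₀ (Nat.cast_ne_zero.2 (Nat.one_le_iff_ne_zero.1 hK))]
  have hx := fun k hk => h.stronglyMeasurable_primal hψ hm hη_pos (k := k) hk i
  have hx_int := fun k hk => (h.memLp_primal hψ hm hη_pos (k := k) hk i).integrable one_le_two
  have hxX (k : ℕ) (hk : k ∈ Icc 1 K) (ω : Ω) : x i k ω ∈ X := (h.projection i k hk ω).1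
  simp only [smul_sum, mul_sum]
  refine integral_map_sum_le (convexOn_nodeAverage hψ.1 hf_conv) (fun _ _ => by positivity)
    hweight hxX (fun k hk => ?_) ?_
  · exact integrable_comp_of_abs_sub_le (abs_nodeAverage_sub_le hf) (hx k hk) (hx_int k hk)
      (hxX k hk)
  · exact integrable_comp_of_abs_sub_le (abs_nodeAverage_sub_le hf)
      (Finset.stronglyMeasurable_fun_sum _ fun k hk => (hx k hk).const_smul _)
      (integrable_finsetSum _ fun k hk => (hx_int k hk).smul _)
      fun ω => hψ.1.sum_mem (fun _ _ => by positivity) hweight fun k hk => hxX k hk ω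

theorem integral_ergodic_average_sub_le [IsProbabilityMeasure μ]
    (h : IsDistributedMirrorDescent μ F K X ψ η W f ξ z g x y) (hψ : StrongConvexOn X m ψ)
    (hm : 0 < m) (hψ_nonneg : ∀ u ∈ X, 0 ≤ ψ u) (hK : 1 ≤ K)
    (hη_pos : ∀ k ∈ Icc 1 K, 0 < η k) (hη_anti : ∀ k ∈ Ico 1 K, η (k + 1) ≤ η k)
    (hW : ∀ k ∈ Icc 1 K, ∀ j, ∑ i, W k i j = 1) (hf_conv : ∀ j, ConvexOn ℝ X (f j)) (hL : 0 ≤ L)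
    (hf : ∀ j, ∀ a ∈ X, ∀ b ∈ X, |f j a - f j b| ≤ L * ‖a - b‖) (hξ : 0 ≤ ξ) (hw : w ∈ X)
    (i : ι) :
    ∫ ω, nodeAverage f ((K : ℝ)⁻¹ • ∑ k ∈ Icc 1 K, x i k ω) ∂μ - nodeAverage f w
      ≤ (K : ℝ)⁻¹ * (ψ w / η K + ξ ^ 2 / (2 * m) * ∑ k ∈ Icc 1 K, η k
        + ∑ k ∈ Icc 1 K, η k / m * (L * ∫ ω, ‖(nodeAverage fun l => z l k ω) - z i k ω‖ ∂μ
          + (L + ξ) * nodeAverage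
              fun j => ∫ ω, ‖(nodeAverage fun l => z l k ω) - z j k ω‖ ∂μ)) := by
  have : Nonempty ι := ⟨i⟩
  have hregret := h.sum_integral_inner_le hψ hm hψ_nonneg hK hη_pos hη_anti hW hw
  have hrounds := sum_le_sum fun k hk =>
    h.integral_sub_le_of_mem_Icc hψ hm hη_pos hL hf hξ (k := k) hk hw i
  rw [sum_add_distrib] at hrounds
  calc ∫ ω, nodeAverage f ((K : ℝ)⁻¹ • ∑ k ∈ Icc 1 K, x i k ω) ∂μ - nodeAverage f w
      ≤ (K : ℝ)⁻¹ * ∑ k ∈ Icc 1 K, ∫ ω, nodeAverage f (x i k ω) ∂μ - nodeAverage f w :=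
        sub_le_sub_right (h.integral_ergodic_average_le hψ hm hK hη_pos hf_conv hf i) _
    _ = (K : ℝ)⁻¹ * ∑ k ∈ Icc 1 K, (∫ ω, nodeAverage f (x i k ω) ∂μ - nodeAverage f w) := by
        rw [sum_sub_distrib, sum_const, Nat.card_Icc, Nat.add_sub_cancel, nsmul_eq_mul, mul_sub,
          inv_mul_cancel_left₀ (Nat.cast_ne_zero.2 (Nat.one_le_iff_ne_zero.1 hK))]
    _ ≤ _ := mul_le_mul_of_nonneg_left (by linarith) (by positivity)

end IsDistributedMirrorDescent

theorem stmt_15_general [IsProbabilityMeasure μ] {F : Filtration ℕ m0} {K : ℕ} (hK : 0 < K)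
    {ψ : E → ℝ} {m : ℝ} (hm : 0 < m) (hψ : StrongConvexOn X m ψ) (hψ_nonneg : ∀ u ∈ X, 0 ≤ ψ u)
    (hf_conv : ∀ j, ConvexOn ℝ X (f j)) (hL : 0 ≤ L)
    (hf : ∀ j, ∀ a ∈ X, ∀ b ∈ X, |f j a - f j b| ≤ L * ‖a - b‖) {η : ℕ → ℝ}
    (hη_pos : ∀ k ∈ Icc 1 K, 0 < η k) (hη_anti : ∀ k < K, η (k + 1) ≤ η k)
    {W : ℕ → Matrix ι ι ℝ} (hW : ∀ k ∈ Icc 1 K, ∀ j, ∑ i, W k i j = 1) (hξ : 0 ≤ ξ)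
    {z g x : ι → ℕ → Ω → E} {y : ℕ → Ω → E}
    (h : IsDistributedMirrorDescent μ F K X ψ η W f ξ z g x y) {w : E} (hw : w ∈ X) (i : ι) :
    ∫ ω, nodeAverage f ((K : ℝ)⁻¹ • ∑ k ∈ Icc 1 K, x i k ω) ∂μ - nodeAverage f w
      ≤ ψ w / (K * η K)
        + ξ ^ 2 / (2 * m * K) * ∑ k ∈ Icc 1 K, η (k - 1)
        + (L + ξ) / (m * (Fintype.card ι * K)) * ∑ k ∈ Icc 1 K, ∑ j,
            η k * ∫ ω, ‖(nodeAverage fun l => z l k ω) - z j k ω‖ ∂μ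
        + L / (m * K) * ∑ k ∈ Icc 1 K,
            η k * ∫ ω, ‖(nodeAverage fun l => z l k ω) - z i k ω‖ ∂μ := by
  have hη_shift : ∑ k ∈ Icc 1 K, η k ≤ ∑ k ∈ Icc 1 K, η (k - 1) :=
    sum_le_sum fun k hk => by
      obtain ⟨hk1, hkK⟩ := mem_Icc.1 hk
      simpa only [Nat.sub_add_cancel hk1] using hη_anti (k - 1) (by lia)
  have hround (k : ℕ) (D : ι → ℝ) : η k / m * (L * D i + (L + ξ) * nodeAverage D)
      = (L + ξ) / (m * Fintype.card ι) * ∑ j, η k * D j + L / m * (η k * D i) := by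
    rw [nodeAverage, smul_eq_mul, ← mul_sum]
    ring
  refine (h.integral_ergodic_average_sub_le hψ hm hψ_nonneg hK hη_pos
    (fun k hk => hη_anti k (mem_Ico.1 hk).2) hW hf_conv hL hf hξ hw i).trans ?_
  calc _ ≤ (K : ℝ)⁻¹ * (ψ w / η K + ξ ^ 2 / (2 * m) * ∑ k ∈ Icc 1 K, η (k - 1) + _) := by gcongr
    _ = _ := by
      rw [sum_congr rfl fun k _ => hround k fun j =>
        ∫ ω, ‖(nodeAverage fun l => z l k ω) - z j k ω‖ ∂μ, sum_add_distrib, ← mul_sum, ← mul_sum]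
      ring

end DistributedMirrorDescent

/-- Expected suboptimality gap of DLMD-DiffEx in terms of the expected consensus errors,
for conditionally unbiased effective stochastic subgradients with conditional second
moment at most `ξ²`. -/
theorem stmt_15 {Ωs : Type*} {m0 : MeasurableSpace Ωs}
    (μpr : Measure Ωs) [IsProbabilityMeasure μpr] (F : Filtration ℕ m0)
    (d n K : ℕ) (hd : 0 < d) (hn : 0 < n) (hK : 0 < K)
    (X : Set (EuclideanSpace ℝ (Fin d))) (hXc : IsClosed X) (hXconv : Convex ℝ X)
    (h0X : (0 : EuclideanSpace ℝ (Fin d)) ∈ X)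
    (ψ : EuclideanSpace ℝ (Fin d) → ℝ) (hψ : StrongConvexOn X 1 ψ)
    (hψnonneg : ∀ x ∈ X, 0 ≤ ψ x) (hψ0 : ψ 0 = 0)
    (f : Fin n → EuclideanSpace ℝ (Fin d) → ℝ)
    (hfconv : ∀ i, ConvexOn ℝ X (f i))
    (L : ℝ) (hL : 0 < L)
    (hLip : ∀ i, ∀ x ∈ X, ∀ y ∈ X, |f i x - f i y| ≤ L * ‖x - y‖)
    (fbar : EuclideanSpace ℝ (Fin d) → ℝ)
    (hfbar : ∀ x, fbar x = (n : ℝ)⁻¹ * ∑ i : Fin n, f i x)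
    (η : ℕ → ℝ) (hηpos : ∀ k ≤ K, 0 < η k) (hηmono : ∀ k < K, η (k + 1) ≤ η k)
    (W : ℕ → Matrix (Fin n) (Fin n) ℝ)
    (hWnonneg : ∀ k ∈ Icc 1 K, ∀ i j, 0 ≤ W k i j)
    (hWrow : ∀ k ∈ Icc 1 K, ∀ i, ∑ j, W k i j = 1)
    (hWcol : ∀ k ∈ Icc 1 K, ∀ j, ∑ i, W k i j = 1)
    (z ghat : Fin n → ℕ → Ωs → EuclideanSpace ℝ (Fin d))
    (hz1 : ∀ i ω, z i 1 ω = 0)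
    (hgmeas : ∀ i k, StronglyMeasurable[F k] (ghat i k))
    (hgL2 : ∀ i k, MemLp (ghat i k) 2 μpr)
    (hrec : ∀ i, ∀ k ∈ Icc 1 K, ∀ ω,
      z i (k + 1) ω = (∑ j : Fin n, W k i j • z j k ω) + ghat i k ω)
    (zbar : ℕ → Ωs → EuclideanSpace ℝ (Fin d))
    (hzbar : ∀ k ω, zbar k ω = (n : ℝ)⁻¹ • ∑ j : Fin n, z j k ω)
    (x : Fin n → ℕ → Ωs → EuclideanSpace ℝ (Fin d))
    (hxmem : ∀ i, ∀ k ∈ Icc 1 K, ∀ ω, x i k ω ∈ X)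
    (hxmin : ∀ i, ∀ k ∈ Icc 1 K, ∀ ω, ∀ w ∈ X,
      ⟪z i k ω, x i k ω⟫ + ψ (x i k ω) / η k ≤ ⟪z i k ω, w⟫ + ψ w / η k)
    (y : ℕ → Ωs → EuclideanSpace ℝ (Fin d))
    (hymem : ∀ k ∈ Icc 1 K, ∀ ω, y k ω ∈ X)
    (hymin : ∀ k ∈ Icc 1 K, ∀ ω, ∀ w ∈ X,
      ⟪zbar k ω, y k ω⟫ + ψ (y k ω) / η k ≤ ⟪zbar k ω, w⟫ + ψ w / η k)
    (ξ : ℝ) (hξ : 0 < ξ)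
    (hsubgrad : ∀ i, ∀ k ∈ Icc 1 K, ∀ᵐ ω ∂μpr, ∀ w ∈ X,
      f i (x i k ω) + ⟪(μpr[ghat i k|F (k - 1)]) ω, w - x i k ω⟫ ≤ f i w)
    (hsecond : ∀ i, ∀ k ∈ Icc 1 K, ∀ᵐ ω ∂μpr,
      (μpr[fun ω' => ‖ghat i k ω'‖ ^ 2|F (k - 1)]) ω ≤ ξ ^ 2) :
    ∀ xstar ∈ X, ∀ i : Fin n,
      (∫ ω, fbar ((K : ℝ)⁻¹ • ∑ k ∈ Icc 1 K, x i k ω) ∂μpr) - fbar xstar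
        ≤ ψ xstar / (K * η K)
          + ξ ^ 2 / (2 * K) * ∑ k ∈ Icc 1 K, η (k - 1)
          + (L + ξ) / (n * K) *
              ∑ k ∈ Icc 1 K, ∑ j : Fin n, η k * ∫ ω, ‖zbar k ω - z j k ω‖ ∂μpr
          + L / K * ∑ k ∈ Icc 1 K, η k * ∫ ω, ‖zbar k ω - z i k ω‖ ∂μpr := by
  intro xstar hxs i
  obtain rfl : fbar = nodeAverage f := funext fun u => by
    rw [hfbar, nodeAverage_apply, nodeAverage, Fintype.card_fin, smul_eq_mul]
  obtain rfl : zbar = fun k ω => nodeAverage fun j => z j k ω := funext₂ fun k ω => by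
    rw [hzbar, nodeAverage, Fintype.card_fin]
  have hrun : IsDistributedMirrorDescent μpr F K X ψ η W f ξ z ghat x y :=
    { recursion :=
        { init := fun j => funext (hz1 j)
          step := fun j k hk => funext fun ω => by
            simpa only [Pi.add_apply, Finset.sum_apply, Pi.smul_apply] using hrec j k hk ω }
      adapted := fun j k _ => hgmeas j k
      subgradient := fun j k hk => ⟨hgL2 j k, hsubgrad j k hk, hsecond j k hk⟩
      projection := fun j k hk ω => ⟨hxmem j k hk ω, hxmin j k hk ω⟩
      projection_average := fun k hk ω => ⟨hymem k hk ω, hymin k hk ω⟩ }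
  simpa only [Fintype.card_fin, mul_one, one_mul] using stmt_15_general hK one_pos hψ hψnonneg
    hfconv hL.le hLip (fun k hk => hηpos k (mem_Icc.1 hk).2) hηmono hWcol hξ.le hrun hxs i
end
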